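/- arXiv:1709.04955 — 2 statements merged into one kernel-verified Lean document; each statement's English description precedes it below -/
import Mathlib

section
/- For every δ > 0 with 2δ < √2 and every ε > 0, there exists E₀ such that for all integers E ≥ E₀ and all positive integers N with δ ≤ N/√E ≤ √2 - δ, one has | q(E,N) · E · exp(-√E · ḡ(N/√E)) / f̄(N/√E) - 1 | ≤ ε. -/
/-- `q E N`: the number of partitions of `E` into `N` distinct positive integer parts. -/
def q (E N : ℕ) : ℕ :=
  (Finset.univ.filter fun p : Nat.Partition E => p.parts.Nodup ∧ p.parts.card = N).card

/-- The function `t ↦ t / (1 - e^{-t})`, extended continuously by the value `1` at `t = 0`. -/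
noncomputable def F (t : ℝ) : ℝ := if t = 0 then 1 else t / (1 - Real.exp (-t))

/-!
Write `P(s) = ∏ j ≤ N, (e^{js} - 1)`. The generating function of the partitions of `E` into `N`
distinct parts is `∏ j ≤ N, x^j / (1 - x^j)`, so Cauchy's formula on the circle `|x| = e^{-s}`
reads `q(E, N) = e^{Es} / P(s) · ℙ(∑ j ≤ N, j G_j = E)` with independent geometric variables `G_j`
of ratios `e^{-js}`. For `s = v / N` with `v` bounded away from `0` and `∞`, the variance of this
sum has order `N³`, and the cosine sums `∑ cos(jθ)` make its characteristic function small away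
from `0`; hence a local limit theorem holds, and it applies at `E` as soon as `E` is within `O(N)`
of the mean. The mean, the variance and `log P(s)` are Riemann sums in `j / N`. The trapezoidal
rule replaces them by integrals over `[0, v]`: the mean becomes `(N / v)² ∫ F`, which equals `E`
exactly when `v` solves the saddle-point equation for `u = N / √E`; for `log P(s)` the endpoint
correction of the trapezoidal rule, together with Stirling's formula, contributes a constant
factor. All the integrals involved have closed forms in terms of `∫ F`, which turns the result
into `ḡ` and `f̄`.
-/

namespace DistinctPartitions

open Asymptotics Complex Filter MeasureTheory Topology
open Finset (range)
open scoped Interval Real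

/-! ### The generating function -/

/-- The `N`-element sets of natural numbers with sum `E`. -/
def setsWithSum (E N : ℕ) : Set (Finset ℕ) := {S | S.card = N ∧ ∑ x ∈ S, x = E}

/-- The `N`-element sets of positive integers with sum `E`: the partitions counted by `q E N`. -/
def posSetsWithSum (E N : ℕ) : Set (Finset ℕ) := {S ∈ setsWithSum E N | 0 ∉ S}

lemma setsWithSum_finite (E N : ℕ) : (setsWithSum E N).Finite := by
  refine (Finset.finite_toSet (range (E + 1)).powerset).subset fun S hS => ?_
  rw [Finset.mem_coe, Finset.mem_powerset]
  intro x hx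
  have hxE : x ≤ ∑ y ∈ S, y := Finset.single_le_sum (f := id) (fun _ _ => Nat.zero_le _) hx
  exact Finset.mem_range.2 (Nat.lt_succ_of_le (hxE.trans_eq hS.2))

lemma posSetsWithSum_finite (E N : ℕ) : (posSetsWithSum E N).Finite :=
  (setsWithSum_finite E N).subset (Set.sep_subset _ _)

lemma q_eq_ncard (E N : ℕ) : q E N = (posSetsWithSum E N).ncard := by
  rw [q, ← Set.ncard_coe_finset]
  refine Set.ncard_congr (fun p _ => p.parts.toFinset) ?_ ?_ ?_
  · intro p hp
    obtain ⟨hnodup, hcard⟩ := (Finset.mem_filter.1 hp).2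
    refine ⟨⟨by rw [Multiset.toFinset_card_of_nodup hnodup, hcard], ?_⟩, fun h0 => ?_⟩
    · rw [Finset.sum_eq_multiset_sum, Multiset.toFinset_val, hnodup.dedup, Multiset.map_id',
        p.parts_sum]
    · exact lt_irrefl _ (p.parts_pos (Multiset.mem_toFinset.1 h0))
  · intro p p' hp hp' h
    have hval := congrArg Finset.val h
    rw [Multiset.toFinset_val, Multiset.toFinset_val, (Finset.mem_filter.1 hp).2.1.dedup,
      (Finset.mem_filter.1 hp').2.1.dedup] at hval
    exact Nat.Partition.ext hval
  · rintro S ⟨⟨hcard, hsum⟩, h0⟩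
    refine ⟨⟨S.val, fun {i} hi => Nat.pos_of_ne_zero fun h => h0 (h ▸ hi), ?_⟩, ?_, ?_⟩
    · rw [← hsum, Finset.sum_eq_multiset_sum, Multiset.map_id']
    · simpa using ⟨S.nodup, hcard⟩
    · exact S.val_toFinset

lemma q_zero_right (E : ℕ) : q E 0 = if E = 0 then 1 else 0 := by
  rw [q_eq_ncard]
  split_ifs with hE
  · have : posSetsWithSum E 0 = {∅} := by
      ext S
      simp only [posSetsWithSum, setsWithSum, Finset.card_eq_zero, Set.mem_ofPred_eq,
        Set.mem_singleton_iff]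
      exact ⟨fun h => h.1.1, fun h => by simp [h, hE]⟩
    rw [this, Set.ncard_singleton]
  · have : posSetsWithSum E 0 = ∅ := by
      refine Set.eq_empty_of_forall_notMem fun S ⟨⟨hcard, hsum⟩, _⟩ => hE ?_
      rw [← hsum, Finset.card_eq_zero.1 hcard, Finset.sum_empty]
    rw [this, Set.ncard_empty]

lemma q_eq_zero_of_lt {E N : ℕ} (h : E < N) : q E N = 0 := by
  rw [q_eq_ncard]
  suffices posSetsWithSum E N = ∅ by rw [this, Set.ncard_empty]
  refine Set.eq_empty_of_forall_notMem fun S ⟨⟨hcard, hsum⟩, h0⟩ => h.not_ge ?_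
  calc N = ∑ x ∈ S, 1 := by rw [← hcard, Finset.card_eq_sum_ones]
    _ ≤ ∑ x ∈ S, x :=
      Finset.sum_le_sum fun x hx => Nat.pos_of_ne_zero fun hx0 => h0 (hx0 ▸ hx)
    _ = E := hsum

lemma image_succ_setsWithSum (E N : ℕ) :
    Finset.image Nat.succ '' setsWithSum E N = posSetsWithSum (E + N) N := by
  have hcard (T : Finset ℕ) : (T.image Nat.succ).card = T.card :=
    Finset.card_image_of_injective _ Nat.succ_injective
  have hsum (T : Finset ℕ) : ∑ x ∈ T.image Nat.succ, x = ∑ x ∈ T, x + T.card := by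
    rw [Finset.sum_image Nat.succ_injective.injOn]
    simp [Finset.sum_add_distrib]
  ext S
  constructor
  · rintro ⟨T, ⟨hT, hTE⟩, rfl⟩
    exact ⟨⟨by rw [hcard, hT], by rw [hsum, hTE, hT]⟩, by simp⟩
  · rintro ⟨⟨hS, hSE⟩, h0⟩
    have hsub : (S : Set ℕ) ⊆ Nat.succ '' Set.univ := fun x hx =>
      ⟨x.pred, trivial, Nat.succ_pred fun hx0 => h0 (hx0 ▸ hx)⟩
    obtain ⟨T, -, rfl⟩ := Finset.subset_set_image_iff.1 hsub
    rw [hcard] at hS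
    rw [hsum, hS] at hSE
    exact ⟨T, ⟨hS, Nat.add_right_cancel hSE⟩, rfl⟩

lemma setsWithSum_succ (E N : ℕ) :
    setsWithSum E (N + 1) = posSetsWithSum E (N + 1) ∪ insert 0 '' posSetsWithSum E N := by
  ext S
  constructor
  · rintro ⟨hcard, hsum⟩
    by_cases h0 : 0 ∈ S
    · refine .inr ⟨S.erase 0, ⟨⟨?_, ?_⟩, S.notMem_erase 0⟩, Finset.insert_erase h0⟩
      · rw [Finset.card_erase_of_mem h0, hcard, Nat.add_sub_cancel]
      · rw [← hsum, ← Finset.sum_erase_add _ _ h0, add_zero]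
    · exact .inl ⟨⟨hcard, hsum⟩, h0⟩
  · rintro (hS | ⟨T, ⟨⟨hcard, hsum⟩, h0⟩, rfl⟩)
    · exact hS.1
    · exact ⟨by rw [Finset.card_insert_of_notMem h0, hcard],
        by rw [Finset.sum_insert h0, hsum, zero_add]⟩

-- Subtract one from every part; a part equal to one disappears.
lemma q_add_succ (E N : ℕ) : q (E + (N + 1)) (N + 1) = q E (N + 1) + q E N := by
  have hdisj : Disjoint (posSetsWithSum E (N + 1)) (insert 0 '' posSetsWithSum E N) := by
    rw [Set.disjoint_left]
    rintro _ hS ⟨T, _, rfl⟩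
    exact hS.2 (Finset.mem_insert_self 0 T)
  have hinj : Set.InjOn (insert 0) (posSetsWithSum E N) := fun S hS T hT h => by
    rw [← Finset.erase_insert hS.2, h, Finset.erase_insert hT.2]
  rw [q_eq_ncard, q_eq_ncard, q_eq_ncard, ← image_succ_setsWithSum,
    Set.ncard_image_of_injective _ (Finset.image_injective Nat.succ_injective), setsWithSum_succ,
    Set.ncard_union_eq hdisj (posSetsWithSum_finite _ _) ((posSetsWithSum_finite _ _).image _),
    hinj.ncard_image]

lemma summable_q_mul_pow {x : ℝ} (hx0 : 0 ≤ x) (hx1 : x < 1) (N : ℕ) :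
    Summable fun E => (q E N : ℝ) * x ^ E := by
  induction N with
  | zero => exact summable_of_hasFiniteSupport ((Set.finite_singleton 0).subset fun E => by
      simp +contextual [q_zero_right])
  | succ N ih =>
    have hterm (k E : ℕ) : 0 ≤ (q E k : ℝ) * x ^ E := by positivity
    have hlt : x ^ (N + 1) < 1 := pow_lt_one₀ hx0 hx1 N.succ_ne_zero
    refine summable_of_sum_range_le
      (c := x ^ (N + 1) * ∑' E, (q E N : ℝ) * x ^ E / (1 - x ^ (N + 1))) (hterm _) fun M => ?_
    set S := ∑ E ∈ range M, (q E (N + 1) : ℝ) * x ^ E with hS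
    have hrec : S ≤ x ^ (N + 1) * (S + ∑' E, (q E N : ℝ) * x ^ E) := by
      calc S ≤ ∑ E ∈ range (N + 1 + M), (q E (N + 1) : ℝ) * x ^ E :=
            Finset.sum_le_sum_of_subset_of_nonneg (Finset.range_mono (Nat.le_add_left _ _))
              fun E _ _ => hterm _ E
        _ = ∑ E ∈ range M, (q (E + (N + 1)) (N + 1) : ℝ) * x ^ (E + (N + 1)) := by
            rw [Finset.sum_range_add, Finset.sum_eq_zero fun E hE => by
              rw [q_eq_zero_of_lt (Finset.mem_range.1 hE), Nat.cast_zero, zero_mul], zero_add]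
            simp only [add_comm (N + 1)]
        _ = x ^ (N + 1) * (S + ∑ E ∈ range M, (q E N : ℝ) * x ^ E) := by
            rw [hS, ← Finset.sum_add_distrib, Finset.mul_sum]
            refine Finset.sum_congr rfl fun E _ => ?_
            rw [q_add_succ]
            push_cast
            ring
        _ ≤ _ := by gcongr; exact ih.sum_le_tsum _ fun E _ => hterm _ E
    rw [tsum_div_const, mul_div_assoc', le_div_iff₀ (by linarith)]
    linarith

theorem hasSum_q_mul_pow {x : ℂ} (hx : ‖x‖ < 1) (N : ℕ) :
    HasSum (fun E => (q E N : ℂ) * x ^ E) (∏ j ∈ range N, x ^ (j + 1) / (1 - x ^ (j + 1))) := by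
  induction N with
  | zero =>
    have hzero : (fun E => (q E 0 : ℂ) * x ^ E) = fun E => if E = 0 then 1 else 0 := by
      ext E
      rcases eq_or_ne E 0 with rfl | hE <;> simp [q_zero_right, *]
    simpa [hzero] using hasSum_ite_eq (0 : ℕ) (1 : ℂ)
  | succ N ih =>
    obtain ⟨f, hf⟩ : Summable fun E => (q E (N + 1) : ℂ) * x ^ E :=
      .of_norm <| by simpa using summable_q_mul_pow (norm_nonneg x) hx (N + 1)
    have hne : 1 - x ^ (N + 1) ≠ 0 := fun h => by
      have := pow_lt_one₀ (norm_nonneg x) hx N.succ_ne_zero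
      rw [← norm_pow, ← sub_eq_zero.1 h, norm_one] at this
      exact lt_irrefl _ this
    have hshift := (hasSum_nat_add_iff' (N + 1)).2 hf
    rw [Finset.sum_eq_zero fun E hE => by
      rw [q_eq_zero_of_lt (Finset.mem_range.1 hE), Nat.cast_zero, zero_mul], sub_zero] at hshift
    have hrec := (hf.add ih).mul_right (x ^ (N + 1))
    have hterm : (fun E => ((q E (N + 1) : ℂ) * x ^ E + q E N * x ^ E) * x ^ (N + 1)) =
        fun E => (q (E + (N + 1)) (N + 1) : ℂ) * x ^ (E + (N + 1)) := by
      ext E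
      rw [q_add_succ]
      push_cast
      ring
    rw [hterm] at hrec
    convert hf using 1
    rw [Finset.prod_range_succ, mul_div_assoc', div_eq_iff hne]
    linear_combination -hshift.unique hrec

/-! ### Cauchy's formula -/

lemma integral_exp_int_mul_I (k : ℤ) :
    ∫ θ in -π..π, cexp (k * I * θ) = if k = 0 then 2 * (π : ℂ) else 0 := by
  split_ifs with hk
  · simp only [hk, Int.cast_zero, zero_mul, Complex.exp_zero, intervalIntegral.integral_const,
      Complex.real_smul]
    push_cast
    ring
  · have hc : (k : ℂ) * I ≠ 0 := mul_ne_zero (Int.cast_ne_zero.2 hk) I_ne_zero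
    have hperiod : cexp (k * I * π) = cexp (k * I * (-π : ℝ)) :=
      Complex.exp_eq_exp_iff_exists_int.2 ⟨k, by push_cast; ring⟩
    rw [integral_exp_mul_complex hc, hperiod, sub_self, zero_div]

theorem integral_exp_mul_of_hasSum {a : ℕ → ℂ} {f : ℝ → ℂ} {r : ℝ} (hr : 0 ≤ r)
    (ha : Summable fun k => ‖a k‖ * r ^ k)
    (hf : ∀ θ : ℝ, HasSum (fun k => a k * (r * cexp (-(θ * I))) ^ k) (f θ)) (n : ℕ) :
    ∫ θ in -π..π, cexp (n * θ * I) * f θ = 2 * π * (a n * r ^ n) := by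
  have hnorm (x : ℝ) (c : ℂ) : ‖cexp (x * I) * c‖ = ‖c‖ := by
    rw [norm_mul, norm_exp_ofReal_mul_I, one_mul]
  have hsum : HasSum
      (fun k => ∫ θ in -π..π, cexp (n * θ * I) * (a k * (r * cexp (-(θ * I))) ^ k))
      (∫ θ in -π..π, cexp (n * θ * I) * f θ) := by
    refine intervalIntegral.hasSum_integral_of_dominated_convergence
      (fun k _ => ‖a k‖ * r ^ k) (fun k => ?_) (fun k => .of_forall fun θ _ => le_of_eq ?_)
      (.of_forall fun _ _ => ha) intervalIntegrable_const
      (.of_forall fun θ _ => (hf θ).mul_left _)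
    · exact Continuous.aestronglyMeasurable (by fun_prop)
    · have h := hnorm (n * θ) (a k * (r * cexp (-(θ * I))) ^ k)
      push_cast at h
      rw [h, norm_mul, norm_pow, norm_mul, ← neg_mul, ← ofReal_neg, norm_exp_ofReal_mul_I, mul_one,
        norm_real, Real.norm_of_nonneg hr]
  have hterm (k : ℕ) : ∫ θ in -π..π, cexp (n * θ * I) * (a k * (r * cexp (-(θ * I))) ^ k) =
      if k = n then 2 * π * (a n * r ^ n) else 0 := by
    have hexp (θ : ℝ) : cexp (n * θ * I) * (a k * (r * cexp (-(θ * I))) ^ k) =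
        a k * r ^ k * cexp (((n : ℤ) - k : ℤ) * I * θ) := by
      rw [mul_pow, ← Complex.exp_nat_mul, mul_left_comm, mul_left_comm (cexp _), ← Complex.exp_add,
        ← mul_assoc]
      congr 2
      push_cast
      ring
    simp_rw [hexp]
    rw [intervalIntegral.integral_const_mul, integral_exp_int_mul_I]
    rcases eq_or_ne k n with rfl | hkn
    · simp only [sub_self, if_true]
      ring
    · rw [if_neg (by omega), if_neg hkn, mul_zero]
  simp_rw [hterm] at hsum
  exact hsum.unique (hasSum_ite_eq n _)

/-- The mean of the geometric distribution on `{1, 2, …}` with ratio `e^{-y}`; its variance is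
`geomMean y * (geomMean y - 1)`. -/
noncomputable def geomMean (y : ℝ) : ℝ := rexp y / (rexp y - 1)

/-- The reciprocal of the characteristic function at `-α` of the geometric distribution on
`{1, 2, …}` with mean `n`. -/
noncomputable def geomFactor (n α : ℝ) : ℂ := 1 + n * (cexp (α * I) - 1)

/-- The characteristic function at `-θ` of `∑ j, j * G j - c`, where `G 1, …, G N` are independent
and `G j` is geometric on `{1, 2, …}` with ratio `e^{-j s}`. -/
noncomputable def geomSumChar (s : ℝ) (N : ℕ) (c θ : ℝ) : ℂ :=
  cexp (c * θ * I) * ∏ j ∈ range N, (geomFactor (geomMean ((j + 1) * s)) ((j + 1) * θ))⁻¹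

/-- The reciprocal of the generating function `∏ j, x ^ j / (1 - x ^ j)` at `x = e^{-s}`. -/
noncomputable def expProd (s : ℝ) (N : ℕ) : ℝ := ∏ j ∈ range N, (rexp ((j + 1) * s) - 1)

lemma exp_sub_one_pos {y : ℝ} (hy : 0 < y) : 0 < rexp y - 1 := sub_pos.2 (Real.one_lt_exp_iff.2 hy)

lemma expProd_pos {s : ℝ} (hs : 0 < s) (N : ℕ) : 0 < expProd s N :=
  Finset.prod_pos fun _ _ => exp_sub_one_pos (by positivity)

lemma one_lt_geomMean {y : ℝ} (hy : 0 < y) : 1 < geomMean y :=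
  (one_lt_div (exp_sub_one_pos hy)).2 (sub_lt_self _ one_pos)

lemma exp_mul_div_one_sub_exp_mul {y : ℝ} (hy : 0 < y) (α : ℝ) :
    rexp (-y) * cexp (-(α * I)) / (1 - rexp (-y) * cexp (-(α * I))) =
      ((rexp y - 1 : ℝ) : ℂ)⁻¹ * (geomFactor (geomMean y) α)⁻¹ := by
  have hy1 : (rexp y : ℂ) - 1 ≠ 0 := mod_cast (exp_sub_one_pos hy).ne'
  have hprod : ((rexp y - 1 : ℝ) : ℂ) * geomFactor (geomMean y) α = rexp y * cexp (α * I) - 1 := by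
    rw [geomFactor, geomMean, ofReal_sub, ofReal_div, ofReal_sub, ofReal_one, mul_add,
      ← mul_assoc, mul_div_cancel₀ _ hy1]
    ring
  have hne : (rexp y : ℂ) * cexp (α * I) ≠ 0 :=
    mul_ne_zero (mod_cast (Real.exp_pos y).ne') (Complex.exp_ne_zero _)
  rw [← mul_inv, hprod, Real.exp_neg, Complex.exp_neg, ofReal_inv, ← mul_inv, div_eq_mul_inv,
    ← mul_inv, mul_sub, mul_one, mul_inv_cancel₀ hne]

theorem integral_geomSumChar {s : ℝ} (hs : 0 < s) (E N : ℕ) :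
    ∫ θ in -π..π, geomSumChar s N E θ = 2 * π * (q E N * rexp (-s) ^ E * expProd s N) := by
  have hr : rexp (-s) < 1 := Real.exp_lt_one_iff.2 (neg_lt_zero.2 hs)
  have hP : (expProd s N : ℂ) ≠ 0 := mod_cast (expProd_pos hs N).ne'
  have hx (θ : ℝ) : ‖(rexp (-s) : ℂ) * cexp (-(θ * I))‖ < 1 := by
    rwa [norm_mul, ← neg_mul, ← ofReal_neg, norm_exp_ofReal_mul_I, mul_one, norm_real,
      Real.norm_of_nonneg (Real.exp_pos _).le]
  have hcauchy := integral_exp_mul_of_hasSum (Real.exp_pos (-s)).le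
    (by simpa using summable_q_mul_pow (Real.exp_pos _).le hr N)
    (fun θ => hasSum_q_mul_pow (hx θ) N) E
  have hchar (θ : ℝ) : geomSumChar s N E θ = expProd s N * (cexp (E * θ * I) *
      ∏ j ∈ range N, ((rexp (-s) : ℂ) * cexp (-(θ * I))) ^ (j + 1) /
        (1 - ((rexp (-s) : ℂ) * cexp (-(θ * I))) ^ (j + 1))) := by
    have hfactor (j : ℕ) := exp_mul_div_one_sub_exp_mul (y := (j + 1) * s) (by positivity)
      ((j + 1) * θ)
    have hpow (j : ℕ) : ((rexp (-s) : ℂ) * cexp (-(θ * I))) ^ (j + 1) =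
        rexp (-((j + 1) * s)) * cexp (-(((j + 1) * θ : ℝ) * I)) := by
      rw [mul_pow, ← ofReal_pow, ← Real.exp_nat_mul, ← Complex.exp_nat_mul]
      push_cast
      ring_nf
    simp_rw [hpow, hfactor]
    rw [Finset.prod_mul_distrib, Finset.prod_inv_distrib, ← ofReal_prod, ← expProd,
      mul_left_comm, mul_inv_cancel_left₀ hP, geomSumChar]
    norm_cast
  simp_rw [hchar]
  rw [intervalIntegral.integral_const_mul, hcauchy]
  ring

/-! ### Bounds for the characteristic function -/

lemma norm_exp_sub_quadratic_le {z : ℂ} (hz : ‖z‖ ≤ 1) :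
    ‖cexp z - 1 - z - z ^ 2 / 2‖ ≤ ‖z‖ ^ 3 := by
  have h := Complex.exp_bound hz (n := 3) (by norm_num)
  simp only [Finset.sum_range_succ, Finset.sum_range_zero, zero_add, pow_zero, pow_one,
    Nat.factorial, Nat.cast_one, div_one] at h
  norm_num at h
  calc ‖cexp z - 1 - z - z ^ 2 / 2‖ = ‖cexp z - (1 + z + z ^ 2 / 2)‖ := by ring_nf
    _ ≤ ‖z‖ ^ 3 * (2 / 9) := h
    _ ≤ ‖z‖ ^ 3 := mul_le_of_le_one_right (by positivity) (by norm_num)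

lemma norm_log_one_add_sub_quadratic_le {w : ℂ} (hw : ‖w‖ ≤ 1 / 2) :
    ‖log (1 + w) - (w - w ^ 2 / 2)‖ ≤ ‖w‖ ^ 3 := by
  have h := Complex.norm_log_sub_logTaylor_le 2 (z := w) (by linarith)
  have htaylor : logTaylor (2 + 1) w = w - w ^ 2 / 2 := by
    simp [logTaylor, Finset.sum_range_succ]
    ring
  have hinv : (1 - ‖w‖)⁻¹ ≤ 2 := by
    rw [inv_le_comm₀ (by linarith) two_pos]
    linarith
  rw [htaylor] at h
  calc ‖log (1 + w) - (w - w ^ 2 / 2)‖ ≤ ‖w‖ ^ 3 * (1 - ‖w‖)⁻¹ / 3 := by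
        convert h using 2
        norm_num
    _ ≤ ‖w‖ ^ 3 * 2 / 3 := by gcongr
    _ ≤ ‖w‖ ^ 3 := by linarith [pow_nonneg (norm_nonneg w) 3]

lemma norm_log_geomFactor_sub_le {n α : ℝ} (hn : 1 ≤ n) (h : n * |α| ≤ 1 / 2) :
    ‖log (geomFactor n α) - (n * α * I + n * (n - 1) * α ^ 2 / 2)‖ ≤ 3 * (n * |α|) ^ 3 := by
  have hn0 : 0 ≤ n := zero_le_one.trans hn
  have hα : |α| ≤ 1 := by nlinarith [abs_nonneg α]
  have hnorm : ‖(α : ℂ) * I‖ = |α| := by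
    rw [norm_mul, norm_I, mul_one, norm_real, Real.norm_eq_abs]
  have hnn : ‖(n : ℂ)‖ = n := by rw [norm_real, Real.norm_of_nonneg hn0]
  set e : ℂ := cexp (α * I) - 1 with he
  have he1 : ‖e‖ ≤ |α| := by
    simpa [he, mul_comm] using Real.norm_exp_I_mul_ofReal_sub_one_le (x := α)
  have he2 : ‖e - α * I‖ ≤ |α| ^ 2 := by
    simpa only [hnorm] using Complex.norm_exp_sub_one_sub_id_le (hnorm.trans_le hα)
  have he3 : ‖e - α * I - (α * I) ^ 2 / 2‖ ≤ |α| ^ 3 := by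
    simpa only [hnorm] using norm_exp_sub_quadratic_le (hnorm.trans_le hα)
  have hw : ‖n * e‖ ≤ n * |α| := by
    rw [norm_mul, hnn]
    gcongr
  have hlog : ‖log (1 + n * e) - (n * e - (n * e) ^ 2 / 2)‖ ≤ (n * |α|) ^ 3 :=
    (norm_log_one_add_sub_quadratic_le (hw.trans h)).trans (by gcongr)
  have hlin : ‖n * (e - α * I - (α * I) ^ 2 / 2)‖ ≤ (n * |α|) ^ 3 := by
    rw [norm_mul, hnn, mul_pow n]
    exact mul_le_mul (le_self_pow₀ hn three_ne_zero) he3 (norm_nonneg _) (by positivity)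
  have hquad : ‖n ^ 2 / 2 * ((e - α * I) * (e + α * I))‖ ≤ (n * |α|) ^ 3 := by
    have hsum : ‖e + α * I‖ ≤ 2 * |α| :=
      (norm_add_le _ _).trans (by rw [hnorm]; linarith)
    calc ‖n ^ 2 / 2 * ((e - α * I) * (e + α * I))‖
        = n ^ 2 / 2 * (‖e - α * I‖ * ‖e + α * I‖) := by simp [norm_real]
      _ ≤ n ^ 2 / 2 * (|α| ^ 2 * (2 * |α|)) := by gcongr
      _ = n ^ 2 * |α| ^ 3 := by ring
      _ ≤ n ^ 3 * |α| ^ 3 := by gcongr; norm_num [hn]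
      _ = (n * |α|) ^ 3 := by ring
  calc ‖log (geomFactor n α) - (n * α * I + n * (n - 1) * α ^ 2 / 2)‖
      = ‖(log (1 + n * e) - (n * e - (n * e) ^ 2 / 2)) + n * (e - α * I - (α * I) ^ 2 / 2)
          - n ^ 2 / 2 * ((e - α * I) * (e + α * I))‖ := by
        rw [geomFactor]
        congr 1
        linear_combination (n * α ^ 2 / 2 - n ^ 2 * α ^ 2 / 2 : ℂ) * I_sq
    _ ≤ (n * |α|) ^ 3 + (n * |α|) ^ 3 + (n * |α|) ^ 3 :=
        (norm_sub_le _ _).trans (add_le_add ((norm_add_le _ _).trans (add_le_add hlog hlin)) hquad)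
    _ = 3 * (n * |α|) ^ 3 := by ring

lemma norm_geomFactor_sq (n α : ℝ) :
    ‖geomFactor n α‖ ^ 2 = 1 + 2 * (n * (n - 1)) * (1 - Real.cos α) := by
  have hre : (geomFactor n α).re = 1 + n * (Real.cos α - 1) := by
    simp [geomFactor, exp_ofReal_mul_I_re]
  have him : (geomFactor n α).im = n * Real.sin α := by
    simp [geomFactor, exp_ofReal_mul_I_im]
  rw [← Complex.normSq_eq_norm_sq, Complex.normSq_apply, hre, him]
  linear_combination n ^ 2 * Real.sin_sq_add_cos_sq α

lemma geomFactor_ne_zero {n : ℝ} (hn : 1 ≤ n) (α : ℝ) : geomFactor n α ≠ 0 := by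
  have hpos : 0 < ‖geomFactor n α‖ ^ 2 := by
    rw [norm_geomFactor_sq]
    have := mul_nonneg (mul_nonneg (zero_le_one.trans hn) (sub_nonneg.2 hn))
      (sub_nonneg.2 (Real.cos_le_one α))
    linarith
  exact norm_ne_zero_iff.1 (pow_ne_zero_iff two_ne_zero |>.1 hpos.ne')

lemma norm_geomFactor_inv_le {κ n : ℝ} (hκ : 0 < κ) (h : κ ≤ n * (n - 1)) (α : ℝ) :
    ‖(geomFactor n α)⁻¹‖ ≤ rexp (-(κ / (1 + 4 * κ) * (1 - Real.cos α))) := by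
  set y := 1 - Real.cos α
  have hy0 : 0 ≤ y := sub_nonneg.2 (Real.cos_le_one α)
  have hy2 : y ≤ 2 := by linarith [Real.neg_one_le_cos α]
  have hlog : 2 * (κ / (1 + 4 * κ) * y) ≤ Real.log (1 + 2 * κ * y) := by
    calc 2 * (κ / (1 + 4 * κ) * y) = 2 * κ * y / (1 + 4 * κ) := by ring
      _ ≤ 2 * κ * y / (1 + 2 * κ * y) := by
        have := mul_le_mul_of_nonneg_left hy2 hκ.le
        exact div_le_div_of_nonneg_left (by positivity) (by positivity) (by linarith)
      _ = 1 - (1 + 2 * κ * y)⁻¹ := by field_simp; ring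
      _ ≤ Real.log (1 + 2 * κ * y) := Real.one_sub_inv_le_log_of_pos (by positivity)
  have hsq : rexp (κ / (1 + 4 * κ) * y) ^ 2 ≤ ‖geomFactor n α‖ ^ 2 := by
    calc rexp (κ / (1 + 4 * κ) * y) ^ 2 = rexp (2 * (κ / (1 + 4 * κ) * y)) := by
          rw [← Real.exp_nat_mul, Nat.cast_ofNat]
      _ ≤ 1 + 2 * κ * y := (Real.le_log_iff_exp_le (by positivity)).1 hlog
      _ ≤ 1 + 2 * (n * (n - 1)) * y := by gcongr
      _ = ‖geomFactor n α‖ ^ 2 := (norm_geomFactor_sq n α).symm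
  rw [norm_inv, Real.exp_neg]
  exact inv_anti₀ (Real.exp_pos _) (le_of_sq_le_sq hsq (norm_nonneg _))

lemma cube_div_three_le_sum_sq (N : ℕ) : (N : ℝ) ^ 3 / 3 ≤ ∑ j ∈ range N, ((j : ℝ) + 1) ^ 2 := by
  induction N with
  | zero => simp
  | succ N ih =>
    rw [Finset.sum_range_succ]
    push_cast
    nlinarith [N.cast_nonneg (α := ℝ)]

lemma two_mul_sin_half_mul_sum_cos (θ : ℝ) (N : ℕ) :
    2 * Real.sin (θ / 2) * ∑ j ∈ range N, Real.cos ((j + 1) * θ) =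
      Real.sin ((N + 1 / 2) * θ) - Real.sin (θ / 2) := by
  have hterm (j : ℕ) : 2 * Real.sin (θ / 2) * Real.cos ((j + 1) * θ) =
      Real.sin (((j + 1 : ℕ) + 1 / 2) * θ) - Real.sin ((j + 1 / 2) * θ) := by
    rw [Real.sin_sub_sin]
    congr 2 <;> push_cast <;> ring_nf
  rw [Finset.mul_sum, Finset.sum_congr rfl fun j _ => hterm j,
    Finset.sum_range_sub fun j : ℕ => Real.sin ((j + 1 / 2) * θ)]
  congr 2
  push_cast
  ring

lemma sum_cos_le {θ : ℝ} (hθ0 : 0 < θ) (hθπ : θ ≤ π) (N : ℕ) :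
    ∑ j ∈ range N, Real.cos ((j + 1) * θ) ≤ π / (2 * θ) := by
  have hsin : θ / π ≤ Real.sin (θ / 2) := by
    convert Real.mul_le_sin (x := θ / 2) (by positivity) (by linarith) using 1
    ring
  have hsin0 : 0 < Real.sin (θ / 2) := (div_pos hθ0 Real.pi_pos).trans_le hsin
  have hsum := two_mul_sin_half_mul_sum_cos θ N
  calc ∑ j ∈ range N, Real.cos ((j + 1) * θ) ≤ 1 / (2 * Real.sin (θ / 2)) := by
        rw [le_div_iff₀ (by positivity)]
        linarith [Real.sin_le_one ((N + 1 / 2) * θ)]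
    _ ≤ 1 / (2 * (θ / π)) := by gcongr
    _ = π / (2 * θ) := by field_simp

lemma le_sum_one_sub_cos {θ : ℝ} (hθ : |θ| ≤ π) (N : ℕ) :
    2 / (3 * π ^ 2) * (N * min 1 ((N * θ) ^ 2)) ≤
      ∑ j ∈ range N, (1 - Real.cos ((j + 1) * θ)) := by
  rcases le_or_gt (N * |θ|) π with h | h
  · have hterm : ∀ j ∈ range N,
        2 / π ^ 2 * θ ^ 2 * ((j : ℝ) + 1) ^ 2 ≤ 1 - Real.cos ((j + 1) * θ) := fun j hj => by
      have hjN : (j : ℝ) + 1 ≤ N := mod_cast Finset.mem_range.1 hj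
      have hle : |((j : ℝ) + 1) * θ| ≤ π := by
        rw [abs_mul, abs_of_pos (by positivity)]
        exact (by gcongr : _ ≤ N * |θ|).trans h
      linarith [Real.cos_le_one_sub_mul_cos_sq hle, mul_pow ((j : ℝ) + 1) θ 2]
    calc 2 / (3 * π ^ 2) * (N * min 1 ((N * θ) ^ 2))
        ≤ 2 / (3 * π ^ 2) * (N * (N * θ) ^ 2) := by gcongr; exact min_le_right _ _
      _ = 2 / π ^ 2 * θ ^ 2 * ((N : ℝ) ^ 3 / 3) := by ring
      _ ≤ 2 / π ^ 2 * θ ^ 2 * ∑ j ∈ range N, ((j : ℝ) + 1) ^ 2 := by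
          gcongr
          exact cube_div_three_le_sum_sq N
      _ ≤ ∑ j ∈ range N, (1 - Real.cos ((j + 1) * θ)) := by
          rw [Finset.mul_sum]
          exact Finset.sum_le_sum hterm
  · have hθ0 : 0 < |θ| := (abs_nonneg θ).lt_of_ne fun h0 => by
      rw [← h0, mul_zero] at h
      exact h.not_ge Real.pi_pos.le
    have habs (j : ℕ) : Real.cos ((j + 1) * θ) = Real.cos ((j + 1) * |θ|) := by
      rw [← Real.cos_abs, abs_mul, abs_of_pos (by positivity)]
    have hcos : ∑ j ∈ range N, Real.cos ((j + 1) * θ) ≤ N / 2 := by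
      simp_rw [habs]
      calc ∑ j ∈ range N, Real.cos ((j + 1) * |θ|) ≤ π / (2 * |θ|) := sum_cos_le hθ0 hθ N
        _ ≤ N * |θ| / (2 * |θ|) := by gcongr
        _ = N / 2 := by field_simp
    calc 2 / (3 * π ^ 2) * (N * min 1 ((N * θ) ^ 2)) ≤ 1 / 2 * (N * 1) := by
          refine mul_le_mul ?_ (by gcongr; exact min_le_left _ _) (by positivity) (by norm_num)
          rw [div_le_iff₀ (by positivity)]
          nlinarith [Real.pi_gt_three]
      _ ≤ ∑ j ∈ range N, (1 - Real.cos ((j + 1) * θ)) := by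
          rw [Finset.sum_sub_distrib, Finset.sum_const, Finset.card_range, nsmul_one]
          linarith

/-! ### The limiting profiles -/

/-- The function `t ↦ (e^t - 1) / t`, extended continuously by the value `1` at `t = 0`. -/
noncomputable def expSlope (t : ℝ) : ℝ := dslope Real.exp 0 t

/-- The logarithm of `(e^t - 1) / t`, the profile of `expProd`. -/
noncomputable def logExpSlope (t : ℝ) : ℝ := Real.log (expSlope t)

/-- The function `t ↦ t² e^t / (e^t - 1)²`, extended continuously by the value `1` at `t = 0`: the
profile of the variance, as `F` is the profile of the mean. -/
noncomputable def varProfile (t : ℝ) : ℝ := rexp t / expSlope t ^ 2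

lemma expSlope_of_ne {t : ℝ} (ht : t ≠ 0) : expSlope t = (rexp t - 1) / t := by
  rw [expSlope, dslope_of_ne _ ht, slope_def_field, Real.exp_zero, sub_zero]

lemma expSlope_zero : expSlope 0 = 1 := by
  rw [expSlope, dslope_same, Real.deriv_exp, Real.exp_zero]

lemma logExpSlope_zero : logExpSlope 0 = 0 := by rw [logExpSlope, expSlope_zero, Real.log_one]

lemma mul_expSlope (t : ℝ) : t * expSlope t = rexp t - 1 := by
  rcases eq_or_ne t 0 with rfl | ht
  · rw [zero_mul, Real.exp_zero, sub_self]
  · rw [expSlope_of_ne ht, mul_div_cancel₀ _ ht]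

lemma expSlope_pos (t : ℝ) : 0 < expSlope t := by
  rcases lt_trichotomy t 0 with ht | rfl | ht
  · rw [expSlope_of_ne ht.ne]
    exact div_pos_of_neg_of_neg (sub_neg.2 (Real.exp_lt_one_iff.2 ht)) ht
  · rw [expSlope_zero]
    exact one_pos
  · rw [expSlope_of_ne ht.ne']
    exact div_pos (exp_sub_one_pos ht) ht

lemma contDiff_expSlope : ContDiff ℝ 2 expSlope := by
  refine contDiff_iff_contDiffAt.2 fun t => ?_
  rcases eq_or_ne t 0 with rfl | ht
  · obtain ⟨p, hp⟩ := analyticAt_rexp (x := 0)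
    exact AnalyticAt.contDiffAt ⟨_, hp.has_fpower_series_dslope_fslope⟩
  · have hquot : ContDiffAt ℝ 2 (fun t => (rexp t - 1) / t) t :=
      ContDiffAt.div (by fun_prop) contDiffAt_id ht
    refine hquot.congr_of_eventuallyEq ?_
    filter_upwards [isOpen_ne.mem_nhds ht] with y hy using expSlope_of_ne hy

lemma differentiable_expSlope : Differentiable ℝ expSlope :=
  contDiff_expSlope.differentiable two_ne_zero

lemma F_eq_exp_div (t : ℝ) : F t = rexp t / expSlope t := by
  rcases eq_or_ne t 0 with rfl | ht
  · rw [F, if_pos rfl, expSlope_zero, Real.exp_zero, div_one]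
  · rw [F, if_neg ht, expSlope_of_ne ht, Real.exp_neg]
    have := Real.exp_ne_zero t
    field_simp

lemma contDiff_F : ContDiff ℝ 2 F := by
  rw [funext F_eq_exp_div]
  exact Real.contDiff_exp.div contDiff_expSlope fun t => (expSlope_pos t).ne'

lemma contDiff_logExpSlope : ContDiff ℝ 2 logExpSlope :=
  contDiff_expSlope.log fun t => (expSlope_pos t).ne'

lemma contDiff_varProfile : ContDiff ℝ 2 varProfile :=
  Real.contDiff_exp.div (contDiff_expSlope.pow 2) fun t => (pow_pos (expSlope_pos t) 2).ne'

lemma mul_deriv_expSlope (t : ℝ) : t * deriv expSlope t = rexp t - expSlope t := by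
  have hprod : HasDerivAt (fun t => t * expSlope t) (1 * expSlope t + t * deriv expSlope t) t :=
    (hasDerivAt_id t).mul (differentiable_expSlope t).hasDerivAt
  rw [funext mul_expSlope] at hprod
  linarith [hprod.unique ((Real.hasDerivAt_exp t).sub_const 1)]

lemma hasDerivAt_mul_logExpSlope (t : ℝ) :
    HasDerivAt (fun t => t * logExpSlope t) (logExpSlope t + F t - 1) t := by
  have h : HasDerivAt (fun t => t * logExpSlope t)
      (1 * logExpSlope t + t * (deriv expSlope t / expSlope t)) t :=
    (hasDerivAt_id t).mul ((differentiable_expSlope t).hasDerivAt.log (expSlope_pos t).ne')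
  convert h using 1
  rw [F_eq_exp_div, mul_div, mul_deriv_expSlope, sub_div, div_self (expSlope_pos t).ne']
  ring

lemma hasDerivAt_mul_F (t : ℝ) : HasDerivAt (fun t => t * F t) (2 * F t - varProfile t) t := by
  have hF : HasDerivAt F
      ((rexp t * expSlope t - rexp t * deriv expSlope t) / expSlope t ^ 2) t := by
    rw [funext F_eq_exp_div]
    exact (Real.hasDerivAt_exp t).div (differentiable_expSlope t).hasDerivAt (expSlope_pos t).ne'
  have h : HasDerivAt (fun t => t * F t)
      (1 * F t + t * ((rexp t * expSlope t - rexp t * deriv expSlope t) / expSlope t ^ 2)) t :=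
    (hasDerivAt_id t).mul hF
  convert h using 1
  have := (expSlope_pos t).ne'
  rw [F_eq_exp_div, varProfile]
  field_simp
  linear_combination mul_deriv_expSlope t - mul_expSlope t

lemma integral_logExpSlope (v : ℝ) :
    ∫ t in 0..v, logExpSlope t = v * logExpSlope v - (∫ t in 0..v, F t) + v := by
  have hL := contDiff_logExpSlope.continuous
  have hF := contDiff_F.continuous
  have h := intervalIntegral.integral_eq_sub_of_hasDerivAt (a := 0) (b := v)
    (fun t _ => hasDerivAt_mul_logExpSlope t) (Continuous.intervalIntegrable (by fun_prop) _ _)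
  rw [intervalIntegral.integral_sub (Continuous.intervalIntegrable (by fun_prop) _ _)
      intervalIntegrable_const,
    intervalIntegral.integral_add (hL.intervalIntegrable _ _) (hF.intervalIntegrable _ _),
    integral_one] at h
  linarith

lemma integral_varProfile (v : ℝ) :
    ∫ t in 0..v, varProfile t = 2 * (∫ t in 0..v, F t) - v * F v := by
  have hK := contDiff_varProfile.continuous
  have hF := contDiff_F.continuous
  have h := intervalIntegral.integral_eq_sub_of_hasDerivAt (a := 0) (b := v)
    (fun t _ => hasDerivAt_mul_F t) (Continuous.intervalIntegrable (by fun_prop) _ _)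
  rw [intervalIntegral.integral_sub ((hF.intervalIntegrable _ _).const_mul 2)
    (hK.intervalIntegrable _ _), intervalIntegral.integral_const_mul] at h
  linarith

lemma one_le_expSlope {t : ℝ} (ht : 0 ≤ t) : 1 ≤ expSlope t := by
  rcases ht.eq_or_lt with rfl | ht
  · rw [expSlope_zero]
  · rw [expSlope_of_ne ht.ne', le_div_iff₀ ht]
    linarith [Real.add_one_le_exp t]

lemma expSlope_le_exp {t : ℝ} (ht : 0 ≤ t) : expSlope t ≤ rexp t := by
  rcases ht.eq_or_lt with rfl | ht
  · rw [expSlope_zero, Real.exp_zero]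
  · rw [expSlope_of_ne ht.ne', div_le_iff₀ ht]
    have hinv : rexp t * rexp (-t) = 1 := by rw [← Real.exp_add, add_neg_cancel, Real.exp_zero]
    nlinarith [Real.exp_pos t, Real.add_one_le_exp (-t)]

lemma one_le_F {t : ℝ} (ht : 0 ≤ t) : 1 ≤ F t := by
  rw [F_eq_exp_div, one_le_div (expSlope_pos t)]
  exact expSlope_le_exp ht

lemma F_le_one_add {t : ℝ} (ht : 0 ≤ t) : F t ≤ 1 + t := by
  rw [F_eq_exp_div, div_le_iff₀ (expSlope_pos t)]
  linarith [mul_expSlope t, one_le_expSlope ht]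

lemma exp_neg_le_varProfile {t : ℝ} (ht : 0 ≤ t) : rexp (-t) ≤ varProfile t := by
  rw [varProfile, le_div_iff₀ (pow_pos (expSlope_pos t) 2)]
  calc rexp (-t) * expSlope t ^ 2 ≤ rexp (-t) * rexp t ^ 2 := by
        gcongr
        exacts [(expSlope_pos t).le, expSlope_le_exp ht]
    _ = rexp t := by rw [← Real.exp_nat_mul, ← Real.exp_add]; ring_nf

lemma varProfile_le_exp {t : ℝ} (ht : 0 ≤ t) : varProfile t ≤ rexp t :=
  div_le_self (Real.exp_pos t).le (one_le_pow₀ (one_le_expSlope ht))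

lemma mul_geomMean {y : ℝ} (hy : 0 < y) : y * geomMean y = F y := by
  rw [geomMean, F_eq_exp_div, expSlope_of_ne hy.ne']
  field_simp

lemma sq_mul_geomMean_mul_sub_one {y : ℝ} (hy : 0 < y) :
    y ^ 2 * (geomMean y * (geomMean y - 1)) = varProfile y := by
  have := (exp_sub_one_pos hy).ne'
  rw [geomMean, varProfile, expSlope_of_ne hy.ne']
  field_simp
  ring

/-! ### Riemann sums -/

lemma riemannSum_sub_eq_trapezoidal_error (f : ℝ → ℝ) {N : ℕ} (hN : 0 < N) {v : ℝ} (hv : v ≠ 0) :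
    ∑ j ∈ range N, f ((j + 1) * (v / N)) - N / v * (∫ t in 0..v, f t) - (f v - f 0) / 2 =
      N / v * trapezoidal_error f N 0 v := by
  obtain ⟨M, rfl⟩ := Nat.exists_eq_add_of_le' hN
  have hM : (M : ℝ) + 1 ≠ 0 := by positivity
  rw [trapezoidal_error, trapezoidal_integral, Finset.sum_range_succ, Nat.add_sub_cancel]
  simp only [zero_add, sub_zero, mul_div_assoc, Nat.cast_add, Nat.cast_one]
  rw [mul_div_cancel₀ v hM]
  generalize ∑ j ∈ range M, f ((j + 1) * (v / (M + 1))) = S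
  field_simp
  ring

theorem exists_abs_riemannSum_sub_le_div {f : ℝ → ℝ} (hf : ContDiff ℝ 2 f) (b : ℝ) :
    ∃ C, ∀ N : ℕ, 0 < N → ∀ v ∈ Set.Ioc 0 b,
      |∑ j ∈ range N, f ((j + 1) * (v / N)) - N / v * (∫ t in 0..v, f t) - (f v - f 0) / 2| ≤
        C / N := by
  obtain ⟨ζ, hζ⟩ := isCompact_Icc.exists_bound_of_continuousOn
    (hf.continuous_iteratedDeriv 2 le_rfl).continuousOn (s := Set.Icc 0 b)
  refine ⟨b ^ 2 * ζ / 12, fun N hN v ⟨hv, hvb⟩ => ?_⟩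
  have hζ0 : 0 ≤ ζ := (norm_nonneg _).trans (hζ 0 ⟨le_rfl, hv.le.trans hvb⟩)
  have hsecond (x : ℝ) : |iteratedDerivWithin 2 f [[0, v]] x| ≤ ζ := by
    rw [Set.uIcc_of_le hv.le]
    by_cases hx : x ∈ Set.Icc 0 v
    · rw [iteratedDerivWithin_eq_iteratedDeriv (uniqueDiffOn_Icc hv) hf.contDiffAt hx]
      exact hζ x ⟨hx.1, hx.2.trans hvb⟩
    · rwa [iteratedDerivWithin_succ, derivWithin_zero_of_notMem_closure, abs_zero]
      rwa [isClosed_Icc.closure_eq]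
  have herror := trapezoidal_error_le_of_c2 hf.contDiffOn hsecond hN
  rw [sub_zero, abs_of_pos hv] at herror
  rw [riemannSum_sub_eq_trapezoidal_error f hN hv.ne', abs_mul, abs_of_pos (by positivity)]
  calc N / v * |trapezoidal_error f N 0 v| ≤ N / v * (v ^ 3 * ζ / (12 * N ^ 2)) := by gcongr
    _ = v ^ 2 * ζ / 12 / N := by field_simp
    _ ≤ b ^ 2 * ζ / 12 / N := by gcongr

theorem exists_abs_riemannSum_sub_le {f : ℝ → ℝ} (hf : ContDiff ℝ 2 f) (b : ℝ) :
    ∃ C, ∀ N : ℕ, 0 < N → ∀ v ∈ Set.Ioc 0 b,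
      |∑ j ∈ range N, f ((j + 1) * (v / N)) - N / v * ∫ t in 0..v, f t| ≤ C := by
  obtain ⟨C, hC⟩ := exists_abs_riemannSum_sub_le_div hf b
  obtain ⟨B, hB⟩ := isCompact_Icc.exists_bound_of_continuousOn hf.continuous.continuousOn
    (s := Set.Icc 0 b)
  refine ⟨|C| + B, fun N hN v hv => ?_⟩
  have htrap := hC N hN v hv
  have hCN : C / N ≤ |C| := (div_le_div_of_nonneg_right (le_abs_self C) N.cast_nonneg).trans
    (div_le_self (abs_nonneg C) (mod_cast hN))
  have h0 := abs_le.1 (hB 0 ⟨le_rfl, hv.1.le.trans hv.2⟩)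
  have hv' := abs_le.1 (hB v ⟨hv.1.le, hv.2⟩)
  rw [abs_le] at htrap ⊢
  constructor <;> linarith

/-! ### The local limit theorem -/

/-- The mean of `∑ j, j * G j` for independent geometric `G 1, …, G N`, as in `geomSumChar`. -/
noncomputable def geomSumMean (s : ℝ) (N : ℕ) : ℝ :=
  ∑ j ∈ range N, (j + 1) * geomMean ((j + 1) * s)

/-- The variance of `∑ j, j * G j` for independent geometric `G 1, …, G N`, as in `geomSumChar`. -/
noncomputable def geomSumVar (s : ℝ) (N : ℕ) : ℝ :=
  ∑ j ∈ range N, (j + 1) ^ 2 * (geomMean ((j + 1) * s) * (geomMean ((j + 1) * s) - 1))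

lemma succ_mul_le_mul {s : ℝ} (hs : 0 < s) {j N : ℕ} (hj : j ∈ range N) :
    (j + 1) * s ≤ N * s := by
  gcongr
  exact_mod_cast Finset.mem_range.1 hj

lemma geomSumMean_eq {s : ℝ} (hs : 0 < s) (N : ℕ) :
    geomSumMean s N = (∑ j ∈ range N, F ((j + 1) * s)) / s := by
  rw [geomSumMean, Finset.sum_div]
  refine Finset.sum_congr rfl fun j _ => ?_
  rw [← mul_geomMean (show 0 < (j + 1) * s by positivity)]
  field_simp

lemma geomSumVar_eq {s : ℝ} (hs : 0 < s) (N : ℕ) :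
    geomSumVar s N = (∑ j ∈ range N, varProfile ((j + 1) * s)) / s ^ 2 := by
  rw [geomSumVar, Finset.sum_div]
  refine Finset.sum_congr rfl fun j _ => ?_
  rw [← sq_mul_geomMean_mul_sub_one (show 0 < (j + 1) * s by positivity)]
  field_simp

lemma le_geomSumVar {s b : ℝ} (hs : 0 < s) {N : ℕ} (hb : N * s ≤ b) :
    N * rexp (-b) / s ^ 2 ≤ geomSumVar s N := by
  have hsum := Finset.card_nsmul_le_sum (range N) (fun j => varProfile ((j + 1) * s)) (rexp (-b))
    fun j hj => (Real.exp_le_exp.2 (neg_le_neg ((succ_mul_le_mul hs hj).trans hb))).trans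
      (exp_neg_le_varProfile (by positivity))
  rw [Finset.card_range, nsmul_eq_mul] at hsum
  rw [geomSumVar_eq hs]
  gcongr

lemma geomSumVar_nonneg {s : ℝ} (hs : 0 < s) (N : ℕ) : 0 ≤ geomSumVar s N :=
  (by positivity : 0 ≤ N * rexp (-(N * s)) / s ^ 2).trans (le_geomSumVar hs le_rfl)

lemma geomSumVar_le {s b : ℝ} (hs : 0 < s) {N : ℕ} (hb : N * s ≤ b) :
    geomSumVar s N ≤ N * rexp b / s ^ 2 := by
  have hsum := Finset.sum_le_card_nsmul (range N) (fun j => varProfile ((j + 1) * s)) (rexp b)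
    fun j hj => (varProfile_le_exp (by positivity)).trans
      (Real.exp_le_exp.2 ((succ_mul_le_mul hs hj).trans hb))
  rw [Finset.card_range, nsmul_eq_mul] at hsum
  rw [geomSumVar_eq hs]
  gcongr

lemma cube_le_mul_geomSumVar {s b : ℝ} (hs : 0 < s) {N : ℕ} (hb : N * s ≤ b) :
    (N : ℝ) ^ 3 ≤ b ^ 2 * rexp b * geomSumVar s N := by
  have hexp : rexp b * rexp (-b) = 1 := by rw [← Real.exp_add, add_neg_cancel, Real.exp_zero]
  calc (N : ℝ) ^ 3 = (N * s) ^ 2 * (rexp b * rexp (-b)) * (N / s ^ 2) := by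
        rw [hexp]
        field_simp
    _ ≤ b ^ 2 * (rexp b * rexp (-b)) * (N / s ^ 2) := by gcongr
    _ = b ^ 2 * rexp b * (N * rexp (-b) / s ^ 2) := by ring
    _ ≤ b ^ 2 * rexp b * geomSumVar s N := by gcongr; exact le_geomSumVar hs hb

lemma geomSumVar_le_mul_cube {s a b : ℝ} (ha : 0 < a) (hs : 0 < s) {N : ℕ} (haN : a ≤ N * s)
    (hb : N * s ≤ b) : geomSumVar s N ≤ rexp b / a ^ 2 * N ^ 3 := by
  calc geomSumVar s N ≤ N * rexp b / s ^ 2 := geomSumVar_le hs hb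
    _ = rexp b / a ^ 2 * N * (a / s) ^ 2 := by field_simp
    _ ≤ rexp b / a ^ 2 * N * N ^ 2 := by gcongr; rwa [div_le_iff₀ hs]
    _ = rexp b / a ^ 2 * N ^ 3 := by ring

lemma continuous_geomSumChar {s : ℝ} (hs : 0 < s) (N : ℕ) (c : ℝ) :
    Continuous (geomSumChar s N c) := by
  refine Continuous.mul (by fun_prop) (continuous_finsetProd _ fun j _ => Continuous.inv₀ ?_ ?_)
  · unfold geomFactor
    fun_prop
  · exact fun θ => geomFactor_ne_zero (one_lt_geomMean (by positivity)).le _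

lemma exp_neg_le_geomMean_mul_sub_one {y : ℝ} (hy : 0 < y) :
    rexp (-y) ≤ geomMean y * (geomMean y - 1) := by
  have hpos := exp_sub_one_pos hy
  have hmean : geomMean y * (geomMean y - 1) = rexp y / (rexp y - 1) ^ 2 := by
    rw [geomMean]
    field_simp
    ring
  rw [hmean, Real.exp_neg, le_div_iff₀ (by positivity), inv_mul_le_iff₀ (Real.exp_pos y)]
  nlinarith

lemma norm_geomSumChar_le {s b θ : ℝ} (hs : 0 < s) {N : ℕ} (hb : N * s ≤ b) (hθ : |θ| ≤ π)
    (c : ℝ) :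
    ‖geomSumChar s N c θ‖ ≤ rexp (-(rexp (-b) / (1 + 4 * rexp (-b)) * (2 / (3 * π ^ 2)) *
      (N * min 1 ((N * θ) ^ 2)))) := by
  set A := rexp (-b) / (1 + 4 * rexp (-b))
  have hphase : ‖cexp (c * θ * I)‖ = 1 := mod_cast norm_exp_ofReal_mul_I (c * θ)
  have hfactor : ∀ j ∈ range N, ‖(geomFactor (geomMean ((j + 1) * s)) ((j + 1) * θ))⁻¹‖ ≤
      rexp (-(A * (1 - Real.cos ((j + 1) * θ)))) := fun j hj =>
    norm_geomFactor_inv_le (Real.exp_pos _) ((Real.exp_le_exp.2 (neg_le_neg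
      ((succ_mul_le_mul hs hj).trans hb))).trans
        (exp_neg_le_geomMean_mul_sub_one (by positivity))) _
  rw [geomSumChar, norm_mul, hphase, one_mul, norm_prod]
  refine (Finset.prod_le_prod (fun _ _ => norm_nonneg _) hfactor).trans ?_
  rw [← Real.exp_sum, Finset.sum_neg_distrib, ← Finset.mul_sum, mul_assoc]
  gcongr
  exact le_sum_one_sub_cos hθ N

lemma geomSumChar_eq_exp {s : ℝ} (hs : 0 < s) (N : ℕ) (c θ : ℝ) :
    geomSumChar s N c θ = cexp (c * θ * I -
      ∑ j ∈ range N, log (geomFactor (geomMean ((j + 1) * s)) ((j + 1) * θ))) := by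
  rw [geomSumChar, Complex.exp_sub, Complex.exp_sum, div_eq_mul_inv, ← Finset.prod_inv_distrib]
  congr 1
  refine Finset.prod_congr rfl fun j _ => ?_
  rw [Complex.exp_log (geomFactor_ne_zero (one_lt_geomMean (by positivity)).le _)]

lemma norm_sum_log_geomFactor_sub_le {s b θ : ℝ} (hs : 0 < s) {N : ℕ} (hb : N * s ≤ b)
    (hθ : (1 + b) * |θ| / s ≤ 1 / 2) :
    ‖∑ j ∈ range N, log (geomFactor (geomMean ((j + 1) * s)) ((j + 1) * θ)) -
      (geomSumMean s N * θ * I + geomSumVar s N * θ ^ 2 / 2)‖ ≤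
        N * (3 * ((1 + b) * |θ| / s) ^ 3) := by
  have hmean : ∀ j ∈ range N, geomMean ((j + 1) * s) * |(j + 1) * θ| ≤ (1 + b) * |θ| / s := by
    intro j hj
    have hy : 0 < (j + 1) * s := by positivity
    rw [abs_mul, abs_of_pos (show (0 : ℝ) < j + 1 by positivity), le_div_iff₀ hs]
    calc geomMean ((j + 1) * s) * ((j + 1) * |θ|) * s
        = (j + 1) * s * geomMean ((j + 1) * s) * |θ| := by ring
      _ = F ((j + 1) * s) * |θ| := by rw [mul_geomMean hy]
      _ ≤ (1 + b) * |θ| := by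
        gcongr
        linarith [F_le_one_add hy.le, succ_mul_le_mul hs hj]
  have hsplit : (geomSumMean s N * θ * I + geomSumVar s N * θ ^ 2 / 2 : ℂ) =
      ∑ j ∈ range N, (geomMean ((j + 1) * s) * ((j + 1) * θ : ℝ) * I + geomMean ((j + 1) * s) *
        (geomMean ((j + 1) * s) - 1) * ((j + 1) * θ : ℝ) ^ 2 / 2) := by
    rw [geomSumMean, geomSumVar, Finset.sum_add_distrib]
    push_cast
    simp only [Finset.sum_mul, Finset.sum_div]
    congr 1 <;> exact Finset.sum_congr rfl fun j _ => by ring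
  rw [hsplit, ← Finset.sum_sub_distrib]
  refine (norm_sum_le_of_le _ fun j hj => ?_).trans_eq
    (by rw [Finset.sum_const, Finset.card_range, nsmul_eq_mul])
  have hn := one_lt_geomMean (show 0 < (j + 1) * s by positivity)
  refine (norm_log_geomFactor_sub_le hn.le ((hmean j hj).trans hθ)).trans ?_
  gcongr
  exact hmean j hj

theorem tendsto_mul_integral_of_dominated {ι : Type*} {l : Filter ι} [l.IsCountablyGenerated]
    {σ : ι → ℝ} {Φ : ι → ℝ → ℂ} {φ : ℝ → ℂ} {g : ℝ → ℝ} {T : ℝ} (hT : 0 < T)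
    (hσ : Tendsto σ l atTop) (hΦ : ∀ᶠ i in l, Continuous (Φ i)) (hg : Integrable g)
    (hbound : ∀ᶠ i in l, ∀ θ, |θ| ≤ T → ‖Φ i θ‖ ≤ g (σ i * θ))
    (hlim : ∀ x, Tendsto (fun i => Φ i (x / σ i)) l (𝓝 (φ x))) :
    Tendsto (fun i => σ i * ∫ θ in -T..T, Φ i θ) l (𝓝 (∫ x, φ x)) := by
  let Ψ : ι → ℝ → ℂ := fun i => (Set.Ioc (-(T * σ i)) (T * σ i)).indicator fun x => Φ i (x / σ i)
  have hrescale : ∀ᶠ i in l, ∫ x, Ψ i x = σ i * ∫ θ in -T..T, Φ i θ := by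
    filter_upwards [hσ.eventually_gt_atTop 0] with i hi
    rw [integral_indicator measurableSet_Ioc,
      ← intervalIntegral.integral_of_le (by nlinarith),
      intervalIntegral.integral_comp_div (Φ i) hi.ne', real_smul, neg_div,
      mul_div_cancel_right₀ _ hi.ne']
  refine (tendsto_integral_filter_of_dominated_convergence (|g ·|) ?_ ?_ hg.abs ?_).congr' hrescale
  · filter_upwards [hΦ] with i hi
    exact (hi.comp (by fun_prop)).aestronglyMeasurable.indicator measurableSet_Ioc
  · filter_upwards [hbound, hσ.eventually_gt_atTop 0] with i hi hσi
    refine .of_forall fun x => ?_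
    have hx : σ i * (x / σ i) = x := mul_div_cancel₀ _ hσi.ne'
    by_cases hmem : x ∈ Set.Ioc (-(T * σ i)) (T * σ i)
    · rw [show Ψ i x = Φ i (x / σ i) from Set.indicator_of_mem hmem _]
      refine (hi (x / σ i) ?_).trans (by rw [hx]; exact le_abs_self _)
      rw [abs_div, abs_of_pos hσi, div_le_iff₀ hσi]
      exact abs_le.2 ⟨hmem.1.le, hmem.2⟩
    · rw [show Ψ i x = 0 from Set.indicator_of_notMem hmem _, norm_zero]
      exact abs_nonneg _
  · refine .of_forall fun x => (hlim x).congr' ?_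
    filter_upwards [(hσ.const_mul_atTop hT).eventually_gt_atTop |x|] with i hi
    have hmem : x ∈ Set.Ioc (-(T * σ i)) (T * σ i) := ⟨(abs_lt.1 hi).1, (abs_lt.1 hi).2.le⟩
    exact (show Ψ i x = _ from Set.indicator_of_mem hmem _).symm

lemma one_add_sq_mul_exp_neg_le {A K T N σ θ : ℝ} (hA : 0 < A) (hN : 0 ≤ N) (hK : 0 ≤ K)
    (hσ : σ ^ 2 ≤ K * N ^ 3) (hθ : |θ| ≤ T) :
    (1 + (σ * θ) ^ 2) * rexp (-(A * (N * min 1 ((N * θ) ^ 2)))) ≤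
      1 + K / A + 6 * K * T ^ 2 / A ^ 3 := by
  set m := N * min 1 ((N * θ) ^ 2)
  have hexp : 1 ≤ rexp (A * m) := Real.one_le_exp (by positivity)
  have hlin : m ≤ rexp (A * m) / A := by
    rw [le_div_iff₀ hA]
    linarith [Real.add_one_le_exp (A * m)]
  have hcube : m ^ 3 ≤ 6 * rexp (A * m) / A ^ 3 := by
    have h := Real.pow_div_factorial_le_exp (A * m) (by positivity) 3
    norm_num [Nat.factorial] at h
    rw [le_div_iff₀ (by positivity)]
    linarith
  have hsq : (σ * θ) ^ 2 ≤ K * m + K * T ^ 2 * m ^ 3 := by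
    rw [mul_pow]
    rcases le_total 1 ((N * θ) ^ 2) with h | h
    · have hmN : m = N := by rw [show m = N * min 1 ((N * θ) ^ 2) from rfl, min_eq_left h, mul_one]
      have hθT : θ ^ 2 ≤ T ^ 2 := sq_le_sq' (abs_le.1 hθ).1 (abs_le.1 hθ).2
      calc σ ^ 2 * θ ^ 2 ≤ K * N ^ 3 * T ^ 2 := by gcongr
        _ ≤ K * m + K * T ^ 2 * m ^ 3 := by rw [hmN]; nlinarith
    · have hmN : m = N ^ 3 * θ ^ 2 := by
        rw [show m = N * min 1 ((N * θ) ^ 2) from rfl, min_eq_right h]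
        ring
      calc σ ^ 2 * θ ^ 2 ≤ K * N ^ 3 * θ ^ 2 := by gcongr
        _ = K * m := by rw [hmN]; ring
        _ ≤ K * m + K * T ^ 2 * m ^ 3 := le_add_of_nonneg_right (by positivity)
  rw [Real.exp_neg, ← div_eq_mul_inv, div_le_iff₀ (Real.exp_pos _)]
  calc 1 + (σ * θ) ^ 2 ≤ rexp (A * m) + (K * (rexp (A * m) / A) +
        K * T ^ 2 * (6 * rexp (A * m) / A ^ 3)) := by
        gcongr
        refine hsq.trans ?_
        gcongr
    _ = (1 + K / A + 6 * K * T ^ 2 / A ^ 3) * rexp (A * m) := by ring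

lemma norm_exponent_geomSumChar_add_le {s a b C c θ : ℝ} (ha : 0 < a) (hs : 0 < s) {N : ℕ}
    (haN : a ≤ N * s) (hb : N * s ≤ b) (hc : |c - geomSumMean s N| ≤ C * N)
    (hθ : (1 + b) / a * (N * |θ|) ≤ 1 / 2) :
    ‖c * θ * I - ∑ j ∈ range N, log (geomFactor (geomMean ((j + 1) * s)) ((j + 1) * θ)) +
        geomSumVar s N * θ ^ 2 / 2‖ ≤
      C * (N * |θ|) + 3 * ((1 + b) / a) ^ 3 * (N * (N * |θ|) ^ 3) := by
  have hb0 : 0 < 1 + b := by linarith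
  have hscale : (1 + b) * |θ| / s ≤ (1 + b) / a * (N * |θ|) := by
    calc (1 + b) * |θ| / s = (1 + b) / a * (a / s * |θ|) := by field_simp
      _ ≤ (1 + b) / a * (N * |θ|) := by gcongr; rwa [div_le_iff₀ hs]
  have hlog := norm_sum_log_geomFactor_sub_le hs hb (hscale.trans hθ)
  have hmean : ‖((c - geomSumMean s N : ℝ) : ℂ) * θ * I‖ ≤ C * N * |θ| := by
    rw [norm_mul, norm_mul, norm_I, mul_one, norm_real, norm_real, Real.norm_eq_abs,
      Real.norm_eq_abs]
    gcongr
  calc _ = ‖((c - geomSumMean s N : ℝ) : ℂ) * θ * I -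
        (∑ j ∈ range N, log (geomFactor (geomMean ((j + 1) * s)) ((j + 1) * θ)) -
          (geomSumMean s N * θ * I + geomSumVar s N * θ ^ 2 / 2))‖ := by
        push_cast
        congr 1
        ring
    _ ≤ C * N * |θ| + N * (3 * ((1 + b) * |θ| / s) ^ 3) := (norm_sub_le _ _).trans (by gcongr)
    _ ≤ C * N * |θ| + N * (3 * ((1 + b) / a * (N * |θ|)) ^ 3) := by gcongr
    _ = _ := by ring

lemma mul_cube_div_sqrt_geomSumVar_le {s b : ℝ} (hs : 0 < s) {N : ℕ} (hb : N * s ≤ b)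
    (hvar : 0 < geomSumVar s N) (x : ℝ) :
    N * (N * |x / √(geomSumVar s N)|) ^ 3 ≤
      b ^ 2 * rexp b * x ^ 2 * (N * |x / √(geomSumVar s N)|) := by
  set θ := x / √(geomSumVar s N)
  have hθ : geomSumVar s N * |θ| ^ 2 = x ^ 2 := by
    rw [sq_abs, div_pow, Real.sq_sqrt hvar.le, mul_div_cancel₀ _ hvar.ne']
  calc N * (N * |θ|) ^ 3 = N ^ 3 * |θ| ^ 2 * (N * |θ|) := by ring
    _ ≤ b ^ 2 * rexp b * geomSumVar s N * |θ| ^ 2 * (N * |θ|) := by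
      gcongr
      exact cube_le_mul_geomSumVar hs hb
    _ = b ^ 2 * rexp b * x ^ 2 * (N * |θ|) := by rw [mul_assoc _ (geomSumVar s N), hθ]

section LocalLimit

variable {ι : Type*} {l : Filter ι} {N : ι → ℕ} {s c : ι → ℝ} {a b C : ℝ}

lemma eventually_pos_of_mul_mem_Icc (ha : 0 < a) (hs : ∀ᶠ i in l, N i * s i ∈ Set.Icc a b) :
    ∀ᶠ i in l, 0 < s i :=
  hs.mono fun _ h => pos_of_mul_pos_right (ha.trans_le h.1) (Nat.cast_nonneg _)

lemma tendsto_geomSumVar_atTop (ha : 0 < a) (hN : Tendsto N l atTop)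
    (hs : ∀ᶠ i in l, N i * s i ∈ Set.Icc a b) :
    Tendsto (fun i => geomSumVar (s i) (N i)) l atTop := by
  obtain rfl | _ := l.eq_or_neBot
  · exact tendsto_bot
  obtain ⟨i, hi⟩ := hs.exists
  have hb : 0 < b := ha.trans_le (hi.1.trans hi.2)
  have hcube : Tendsto (fun i => (N i : ℝ) ^ 3) l atTop :=
    (tendsto_pow_atTop three_ne_zero).comp (tendsto_natCast_atTop_atTop.comp hN)
  refine Tendsto.atTop_of_const_mul₀ (show 0 < b ^ 2 * rexp b by positivity)
    (tendsto_atTop_mono' l ?_ hcube)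
  filter_upwards [hs, eventually_pos_of_mul_mem_Icc ha hs] with i hi hsi
  exact cube_le_mul_geomSumVar hsi hi.2

lemma tendsto_div_sqrt_geomSumVar (ha : 0 < a) (hN : Tendsto N l atTop)
    (hs : ∀ᶠ i in l, N i * s i ∈ Set.Icc a b) :
    Tendsto (fun i => N i / √(geomSumVar (s i) (N i))) l (𝓝 0) := by
  have hN' : Tendsto (fun i => (N i : ℝ)) l atTop := tendsto_natCast_atTop_atTop.comp hN
  have hsq : Tendsto (fun i => √(N i ^ 2 / geomSumVar (s i) (N i))) l (𝓝 0) := by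
    rw [← Real.sqrt_zero]
    refine (squeeze_zero' (g := fun i => b ^ 2 * rexp b / N i) ?_ ?_
      (hN'.const_div_atTop _)).sqrt
    · filter_upwards [eventually_pos_of_mul_mem_Icc ha hs] with i hsi
      exact div_nonneg (sq_nonneg _) (geomSumVar_nonneg hsi _)
    · filter_upwards [hs, eventually_pos_of_mul_mem_Icc ha hs, hN'.eventually_gt_atTop 0,
        (tendsto_geomSumVar_atTop ha hN hs).eventually_gt_atTop 0] with i hi hsi hNi hvar
      rw [div_le_div_iff₀ hvar hNi]
      linarith [cube_le_mul_geomSumVar hsi hi.2]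
  simpa only [Real.sqrt_div (sq_nonneg _), Real.sqrt_sq (Nat.cast_nonneg _)] using hsq

theorem tendsto_geomSumChar_div_sqrt_geomSumVar (ha : 0 < a) (hN : Tendsto N l atTop)
    (hs : ∀ᶠ i in l, N i * s i ∈ Set.Icc a b)
    (hc : ∀ᶠ i in l, |c i - geomSumMean (s i) (N i)| ≤ C * N i) (x : ℝ) :
    Tendsto (fun i => geomSumChar (s i) (N i) (c i) (x / √(geomSumVar (s i) (N i)))) l
      (𝓝 (rexp (-(1 / 2) * x ^ 2) : ℝ)) := by
  set θ : ι → ℝ := fun i => x / √(geomSumVar (s i) (N i))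
  have hspos := eventually_pos_of_mul_mem_Icc ha hs
  have hvar := (tendsto_geomSumVar_atTop ha hN hs).eventually_gt_atTop 0
  have hNθ : Tendsto (fun i => N i * |θ i|) l (𝓝 0) := by
    have h := (tendsto_div_sqrt_geomSumVar ha hN hs).mul_const |x|
    rw [zero_mul] at h
    refine h.congr fun i => ?_
    rw [abs_div, abs_of_nonneg (Real.sqrt_nonneg _)]
    ring
  have hsmall : ∀ᶠ i in l, (1 + b) / a * (N i * |θ i|) ≤ 1 / 2 := by
    have h := hNθ.const_mul ((1 + b) / a)
    rw [mul_zero] at h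
    exact h.eventually_le_const one_half_pos
  have hexponent : Tendsto (fun i => c i * θ i * I -
      ∑ j ∈ range (N i), log (geomFactor (geomMean ((j + 1) * s i)) ((j + 1) * θ i))) l
      (𝓝 ((-(1 / 2) * x ^ 2 : ℝ) : ℂ)) := by
    rw [tendsto_iff_norm_sub_tendsto_zero]
    have hlim := hNθ.const_mul (C + 3 * ((1 + b) / a) ^ 3 * (b ^ 2 * rexp b * x ^ 2))
    rw [mul_zero] at hlim
    refine squeeze_zero' (.of_forall fun _ => norm_nonneg _) ?_ hlim
    filter_upwards [hs, hspos, hvar, hc, hsmall] with i hi hsi hvari hci hθi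
    have hgauss : ((-(1 / 2) * x ^ 2 : ℝ) : ℂ) = -(geomSumVar (s i) (N i) * θ i ^ 2 / 2) := by
      rw [← ofReal_pow (θ i), div_pow, Real.sq_sqrt hvari.le]
      norm_cast
      field_simp
    rw [hgauss, sub_neg_eq_add]
    refine (norm_exponent_geomSumChar_add_le ha hsi hi.1 hi.2 hci hθi).trans ?_
    rw [add_mul, mul_assoc (3 * _)]
    have hb : 0 ≤ 1 + b := by linarith [hi.1, hi.2]
    gcongr _ + _ * ?_
    exact mul_cube_div_sqrt_geomSumVar_le hsi hi.2 hvari x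
  rw [ofReal_exp]
  refine hexponent.cexp.congr' (hspos.mono fun i hsi => (geomSumChar_eq_exp hsi _ _ _).symm)

theorem tendsto_sqrt_geomSumVar_mul_integral [l.IsCountablyGenerated] (ha : 0 < a)
    (hN : Tendsto N l atTop) (hs : ∀ᶠ i in l, N i * s i ∈ Set.Icc a b)
    (hc : ∀ᶠ i in l, |c i - geomSumMean (s i) (N i)| ≤ C * N i) :
    Tendsto (fun i => √(geomSumVar (s i) (N i)) *
      ∫ θ in -π..π, geomSumChar (s i) (N i) (c i) θ) l (𝓝 √(2 * π)) := by
  have hspos := eventually_pos_of_mul_mem_Icc ha hs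
  set A := rexp (-b) / (1 + 4 * rexp (-b)) * (2 / (3 * π ^ 2))
  set M := 1 + rexp b / a ^ 2 / A + 6 * (rexp b / a ^ 2) * π ^ 2 / A ^ 3
  have hgauss : ∫ x : ℝ, ((rexp (-(1 / 2) * x ^ 2) : ℝ) : ℂ) = (√(2 * π) : ℝ) := by
    rw [integral_complex_ofReal, integral_gaussian, div_div_eq_mul_div, div_one, mul_comm π]
  rw [← hgauss]
  refine tendsto_mul_integral_of_dominated (g := fun x => M * (1 + x ^ 2)⁻¹) Real.pi_pos
    (Real.tendsto_sqrt_atTop.comp (tendsto_geomSumVar_atTop ha hN hs))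
    (hspos.mono fun i hi => continuous_geomSumChar hi _ _) (integrable_inv_one_add_sq.const_mul M)
    ?_ (tendsto_geomSumChar_div_sqrt_geomSumVar ha hN hs hc)
  filter_upwards [hs, hspos] with i hi hsi θ hθ
  refine (norm_geomSumChar_le hsi hi.2 hθ _).trans ?_
  rw [← div_eq_mul_inv, le_div_iff₀' (by positivity)]
  refine one_add_sq_mul_exp_neg_le (by positivity) (Nat.cast_nonneg _) (by positivity) ?_ hθ
  rw [Real.sq_sqrt (geomSumVar_nonneg hsi _)]
  exact geomSumVar_le_mul_cube ha hsi hi.1 hi.2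

theorem q_isEquivalent_of_abs_sub_geomSumMean_le [l.IsCountablyGenerated] {E : ι → ℕ} (ha : 0 < a)
    (hN : Tendsto N l atTop) (hs : ∀ᶠ i in l, N i * s i ∈ Set.Icc a b)
    (hE : ∀ᶠ i in l, |E i - geomSumMean (s i) (N i)| ≤ C * N i) :
    (fun i => (q (E i) (N i) : ℝ)) ~[l] fun i =>
      rexp (E i * s i) / (expProd (s i) (N i) * √(2 * π * geomSumVar (s i) (N i))) := by
  have hspos := eventually_pos_of_mul_mem_Icc ha hs
  have hvar := (tendsto_geomSumVar_atTop ha hN hs).eventually_gt_atTop 0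
  have hπ : √(2 * π) ≠ 0 := by positivity
  have hlim := (continuous_re.tendsto _).comp
    ((tendsto_sqrt_geomSumVar_mul_integral ha hN hs hE).div_const (√(2 * π) : ℂ))
  rw [div_self (ofReal_ne_zero.2 hπ), one_re] at hlim
  refine isEquivalent_of_tendsto_one (hlim.congr' ?_)
  filter_upwards [hspos, hvar] with i hsi hvari
  have hexp : rexp (E i * s i) = (rexp (-s i) ^ E i)⁻¹ := by
    rw [← Real.exp_nat_mul, mul_neg, Real.exp_neg, inv_inv]
  have hsqrt : √(2 * π) ^ 2 = 2 * π := Real.sq_sqrt (by positivity)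
  have hP := (expProd_pos hsi (N i)).ne'
  rw [Function.comp_apply, integral_geomSumChar hsi]
  norm_cast
  rw [Pi.div_apply, hexp,
    Real.sqrt_mul (by positivity : 0 ≤ 2 * π) (geomSumVar (s i) (N i))]
  field_simp
  rw [hsqrt]
  ring

end LocalLimit

/-! ### Asymptotics of the factors -/

lemma exists_abs_sub_geomSumMean_le {a : ℝ} (ha : 0 < a) (b : ℝ) :
    ∃ C, ∀ N : ℕ, 0 < N → ∀ v ∈ Set.Icc a b,
      |(N / v) ^ 2 * (∫ t in 0..v, F t) - geomSumMean (v / N) N| ≤ C * N := by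
  obtain ⟨C, hC⟩ := exists_abs_riemannSum_sub_le contDiff_F b
  refine ⟨C / a, fun N hN v ⟨hav, hvb⟩ => ?_⟩
  have hv : 0 < v := ha.trans_le hav
  have hsum := hC N hN v ⟨hv, hvb⟩
  have hfactor : (N / v) ^ 2 * (∫ t in 0..v, F t) - geomSumMean (v / N) N =
      -(N / v * (∑ j ∈ range N, F ((j + 1) * (v / N)) - N / v * ∫ t in 0..v, F t)) := by
    rw [geomSumMean_eq (by positivity), div_div_eq_mul_div]
    ring
  rw [hfactor, abs_neg, abs_mul, abs_of_pos (by positivity)]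
  calc N / v * |∑ j ∈ range N, F ((j + 1) * (v / N)) - N / v * ∫ t in 0..v, F t|
      ≤ N / a * C := by gcongr
    _ = C / a * N := by ring

lemma expProd_eq_factorial_mul (s : ℝ) (N : ℕ) :
    expProd s N = N.factorial * s ^ N * rexp (∑ j ∈ range N, logExpSlope ((j + 1) * s)) := by
  have hfactor (j : ℕ) : rexp ((j + 1) * s) - 1 =
      ((j + 1 : ℕ) : ℝ) * s * rexp (logExpSlope ((j + 1) * s)) := by
    rw [logExpSlope, Real.exp_log (expSlope_pos _), Nat.cast_succ, mul_expSlope]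
  rw [expProd, Finset.prod_congr rfl fun j _ => hfactor j, Finset.prod_mul_distrib,
    Finset.prod_mul_distrib, ← Nat.cast_prod, Finset.prod_range_add_one_eq_factorial,
    Finset.prod_const, Finset.card_range, Real.exp_sum]

lemma isEquivalent_sqrt {ι : Type*} {l : Filter ι} {f g : ι → ℝ} (h : f ~[l] g) :
    (fun i => √(f i)) ~[l] fun i => √(g i) := by
  obtain ⟨φ, hφ, hfg⟩ := h.exists_eq_mul
  refine isEquivalent_iff_exists_eq_mul.2 ⟨fun i => √(φ i), by simpa using hφ.sqrt, ?_⟩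
  filter_upwards [hfg, hφ.eventually_const_le one_pos] with i hi hφi
  rw [hi, Pi.mul_apply, Pi.mul_apply, Real.sqrt_mul hφi]

lemma mul_le_integral {f : ℝ → ℝ} (hf : Continuous f) {m v : ℝ} (hv : 0 ≤ v)
    (hm : ∀ t ∈ Set.Icc 0 v, m ≤ f t) : v * m ≤ ∫ t in 0..v, f t := by
  have h := intervalIntegral.integral_mono_on (μ := volume) hv intervalIntegrable_const
    (hf.intervalIntegrable 0 v) hm
  rwa [intervalIntegral.integral_const, sub_zero, smul_eq_mul] at h

section Asymptotics

variable {ι : Type*} {l : Filter ι} {E N : ι → ℕ} {v : ι → ℝ} {a b : ℝ}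

lemma isEquivalent_riemannSum {f : ℝ → ℝ} (hf : ContDiff ℝ 2 f) {m : ℝ} (hm : 0 < m)
    (hmf : ∀ t ∈ Set.Icc 0 b, m ≤ f t) (ha : 0 < a) (hN : Tendsto N l atTop)
    (hv : ∀ᶠ i in l, v i ∈ Set.Icc a b) :
    (fun i => ∑ j ∈ range (N i), f ((j + 1) * (v i / N i))) ~[l]
      fun i => N i / v i * ∫ t in 0..v i, f t := by
  obtain ⟨C, hC⟩ := exists_abs_riemannSum_sub_le hf b
  have hN' : Tendsto (fun i => (N i : ℝ)) l atTop := tendsto_natCast_atTop_atTop.comp hN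
  have hlower : ∀ᶠ i in l, m * N i ≤ N i / v i * ∫ t in 0..v i, f t := by
    filter_upwards [hv] with i hvi
    have hvi0 := ha.trans_le hvi.1
    calc m * N i = N i / v i * (v i * m) := by field_simp
      _ ≤ N i / v i * ∫ t in 0..v i, f t := by
        gcongr
        exact mul_le_integral hf.continuous hvi0.le fun t ht => hmf t ⟨ht.1, ht.2.trans hvi.2⟩
  have herror : ((fun i => ∑ j ∈ range (N i), f ((j + 1) * (v i / N i))) -
      fun i => N i / v i * ∫ t in 0..v i, f t) =O[l] fun _ => (1 : ℝ) := by
    refine IsBigO.of_bound C ?_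
    filter_upwards [hv, hN.eventually_gt_atTop 0] with i hvi hNi
    rw [norm_one, mul_one]
    exact hC (N i) hNi (v i) ⟨ha.trans_le hvi.1, hvi.2⟩
  refine herror.trans_isLittleO (isLittleO_const_left.2 (.inr ?_))
  exact tendsto_norm_atTop_atTop.comp (tendsto_atTop_mono' l hlower (hN'.const_mul_atTop hm))

theorem q_isEquivalent_exp_div [l.IsCountablyGenerated] (ha : 0 < a) (hN : Tendsto N l atTop)
    (hv : ∀ᶠ i in l, v i ∈ Set.Icc a b)
    (hE : ∀ᶠ i in l, (E i : ℝ) = (N i / v i) ^ 2 * ∫ t in 0..v i, F t) :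
    (fun i => (q (E i) (N i) : ℝ)) ~[l] fun i => rexp (E i * (v i / N i)) /
      (expProd (v i / N i) (N i) * √(2 * π * geomSumVar (v i / N i) (N i))) := by
  obtain ⟨C, hC⟩ := exists_abs_sub_geomSumMean_le ha b
  have hNpos := hN.eventually_gt_atTop 0
  have hs : ∀ᶠ i in l, N i * (v i / N i) ∈ Set.Icc a b := by
    filter_upwards [hv, hNpos] with i hvi hNi
    rwa [mul_div_cancel₀ _ (Nat.cast_ne_zero.2 hNi.ne')]
  have hmean : ∀ᶠ i in l, |(E i : ℝ) - geomSumMean (v i / N i) (N i)| ≤ C * N i := by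
    filter_upwards [hv, hE, hNpos] with i hvi hEi hNi
    rw [hEi]
    exact hC _ hNi _ hvi
  exact q_isEquivalent_of_abs_sub_geomSumMean_le ha hN hs hmean

lemma isEquivalent_exp_sum_logExpSlope (ha : 0 < a) (hN : Tendsto N l atTop)
    (hv : ∀ᶠ i in l, v i ∈ Set.Icc a b) :
    (fun i => rexp (∑ j ∈ range (N i), logExpSlope ((j + 1) * (v i / N i)))) ~[l]
      fun i => rexp (N i / v i * ∫ t in 0..v i, logExpSlope t) * √(expSlope (v i)) := by
  obtain ⟨C, hC⟩ := exists_abs_riemannSum_sub_le_div contDiff_logExpSlope b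
  have hsum : Tendsto (fun i => ∑ j ∈ range (N i), logExpSlope ((j + 1) * (v i / N i)) -
      N i / v i * (∫ t in 0..v i, logExpSlope t) - logExpSlope (v i) / 2) l (𝓝 0) := by
    refine squeeze_zero_norm' ?_
      ((tendsto_natCast_atTop_atTop (R := ℝ).comp hN).const_div_atTop C)
    filter_upwards [hv, hN.eventually_gt_atTop 0] with i hvi hNi
    simpa only [logExpSlope_zero, sub_zero, Real.norm_eq_abs, Function.comp_apply] using
      hC (N i) hNi (v i) ⟨ha.trans_le hvi.1, hvi.2⟩
  have hexp := hsum.rexp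
  rw [Real.exp_zero] at hexp
  refine isEquivalent_of_tendsto_one (hexp.congr fun i => ?_)
  have hsqrt : √(expSlope (v i)) = rexp (logExpSlope (v i) / 2) := by
    rw [Real.exp_half, logExpSlope, Real.exp_log (expSlope_pos _)]
  rw [Pi.div_apply, hsqrt, ← Real.exp_add, ← Real.exp_sub, sub_sub]

lemma isEquivalent_expProd (ha : 0 < a) (hN : Tendsto N l atTop)
    (hv : ∀ᶠ i in l, v i ∈ Set.Icc a b) :
    (fun i => expProd (v i / N i) (N i)) ~[l] fun i => √(2 * N i * π) *
      rexp (N i * Real.log (v i) - N i + N i / v i * ∫ t in 0..v i, logExpSlope t) *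
        √(expSlope (v i)) := by
  have hstirling := Stirling.factorial_isEquivalent_stirling.comp_tendsto hN
  refine ((hstirling.mul (IsEquivalent.refl (u := fun i => (v i / N i) ^ N i))).mul
    (isEquivalent_exp_sum_logExpSlope ha hN hv)).congr_left
      (.of_forall fun i => (expProd_eq_factorial_mul _ _).symm) |>.congr_right ?_
  filter_upwards [hv, hN.eventually_gt_atTop 0] with i hvi hNi
  have hpow : (N i / rexp 1) ^ N i * (v i / N i) ^ N i = rexp (N i * Real.log (v i) - N i) := by
    have hNi' : (N i : ℝ) ≠ 0 := Nat.cast_ne_zero.2 hNi.ne'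
    rw [← mul_pow, Real.exp_sub, Real.exp_nat_mul, Real.exp_log (ha.trans_le hvi.1),
      ← Real.exp_one_pow, ← div_pow]
    congr 1
    field_simp
  simp only [Pi.mul_apply, Function.comp_apply]
  rw [Real.exp_add, ← hpow]
  ring

lemma isEquivalent_geomSumVar (ha : 0 < a) (hN : Tendsto N l atTop)
    (hv : ∀ᶠ i in l, v i ∈ Set.Icc a b) :
    (fun i => geomSumVar (v i / N i) (N i)) ~[l] fun i =>
      (N i / v i) ^ 3 * ∫ t in 0..v i, varProfile t := by
  have hsum := isEquivalent_riemannSum contDiff_varProfile (Real.exp_pos (-b))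
    (fun t ht => (Real.exp_le_exp.2 (neg_le_neg ht.2)).trans (exp_neg_le_varProfile ht.1)) ha hN hv
  refine ((IsEquivalent.refl (u := fun i => (N i / v i) ^ 2)).mul hsum).congr_left ?_
    |>.congr_right (.of_forall fun i => ?_)
  · filter_upwards [hv, hN.eventually_gt_atTop 0] with i hvi hNi
    have hs : 0 < v i / N i := div_pos (ha.trans_le hvi.1) (mod_cast hNi)
    rw [Pi.mul_apply, geomSumVar_eq hs, div_pow, div_pow, div_div_eq_mul_div]
    ring
  · simp only [Pi.mul_apply]
    ring

end Asymptotics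

/-! ### The saddle point -/

/-- The function `ḡ` at `u`, with the saddle point `v = v(u)` as a second argument. -/
noncomputable def saddleExponent (u v : ℝ) : ℝ := 2 * v / u - u * Real.log (rexp v - 1)

/-- The function `f̄` at `u`, with the saddle point `v = v(u)` as a second argument. -/
noncomputable def saddlePrefactor (u v : ℝ) : ℝ :=
  v / ((2 : ℝ) ^ ((3 : ℝ) / 2) * π * u) * (rexp v - 1 - u ^ 2 / 2 * rexp v) ^ (-(1 : ℝ) / 2)

section Saddle

variable {u v r : ℝ}

lemma sq_le_of_saddle (hu : 0 < u) (hv : 0 < v) (h : v ^ 2 / u ^ 2 = ∫ t in 0..v, F t) :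
    u ^ 2 ≤ v := by
  have hle := mul_le_integral contDiff_F.continuous hv.le fun t ht => one_le_F ht.1
  rw [← h, le_div_iff₀ (by positivity)] at hle
  exact le_of_mul_le_mul_left (by linarith) hv

lemma mul_le_one_of_saddle (hv : 0 < v) (h : v ^ 2 / u ^ 2 = ∫ t in 0..v, F t) :
    v * (1 / u ^ 2 - 1 / 2) ≤ 1 := by
  have hle : ∫ t in 0..v, F t ≤ ∫ t in 0..v, (1 + t) :=
    intervalIntegral.integral_mono_on hv.le (contDiff_F.continuous.intervalIntegrable 0 v)
      (Continuous.intervalIntegrable (by fun_prop) 0 v) fun t ht => F_le_one_add ht.1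
  have hint : ∫ t in 0..v, (1 + t) = v + v ^ 2 / 2 := by
    rw [intervalIntegral.integral_add intervalIntegrable_const
      intervalIntegral.intervalIntegrable_id, intervalIntegral.integral_const, integral_id,
      smul_eq_mul]
    ring
  rw [hint, ← h] at hle
  refine le_of_mul_le_mul_left ?_ hv
  linear_combination hle

lemma mem_Icc_of_saddle {δ w : ℝ} (hδ : 0 < δ) (hw : w < √2) (hu : u ∈ Set.Icc δ w) (hv : 0 < v)
    (h : v ^ 2 / u ^ 2 = ∫ t in 0..v, F t) :
    v ∈ Set.Icc (δ ^ 2) (1 / (1 / w ^ 2 - 1 / 2)) := by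
  have hu0 : 0 < u := hδ.trans_le hu.1
  have hw0 : 0 < w := hu0.trans_le hu.2
  have hw2 : 0 < 1 / w ^ 2 - 1 / 2 :=
    sub_pos.2 (one_div_lt_one_div_of_lt (by positivity) ((Real.lt_sqrt hw0.le).1 hw))
  refine ⟨(pow_le_pow_left₀ hδ.le hu.1 2).trans (sq_le_of_saddle hu0 hv h), ?_⟩
  rw [le_div_iff₀ hw2]
  calc v * (1 / w ^ 2 - 1 / 2) ≤ v * (1 / u ^ 2 - 1 / 2) := by
        gcongr
        exact hu.2
    _ ≤ 1 := mul_le_one_of_saddle hv h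

lemma integral_varProfile_of_saddle (hu : 0 < u) (hv : 0 < v)
    (h : v ^ 2 / u ^ 2 = ∫ t in 0..v, F t) :
    ∫ t in 0..v, varProfile t =
      2 * v ^ 2 / (u ^ 2 * (rexp v - 1)) * (rexp v - 1 - u ^ 2 / 2 * rexp v) := by
  have hexp := (exp_sub_one_pos hv).ne'
  rw [integral_varProfile, ← h, F_eq_exp_div, expSlope_of_ne hv.ne']
  field_simp

lemma exp_sub_pos_of_saddle (hu : 0 < u) (hv : 0 < v) (h : v ^ 2 / u ^ 2 = ∫ t in 0..v, F t) :
    0 < rexp v - 1 - u ^ 2 / 2 * rexp v := by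
  have hint : 0 < ∫ t in 0..v, varProfile t :=
    intervalIntegral.intervalIntegral_pos_of_pos
      (contDiff_varProfile.continuous.intervalIntegrable 0 v)
      (fun t => div_pos (Real.exp_pos t) (pow_pos (expSlope_pos t) 2)) hv
  have hexp := exp_sub_one_pos hv
  rw [integral_varProfile_of_saddle hu hv h] at hint
  exact (pos_iff_pos_of_mul_pos hint).1 (by positivity)

lemma saddlePrefactor_pos (hu : 0 < u) (hv : 0 < v) (h : v ^ 2 / u ^ 2 = ∫ t in 0..v, F t) :
    0 < saddlePrefactor u v :=
  mul_pos (by positivity) (Real.rpow_pos_of_pos (exp_sub_pos_of_saddle hu hv h) _)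

lemma saddlePrefactor_eq (hu : 0 < u) (hv : 0 < v) (h : v ^ 2 / u ^ 2 = ∫ t in 0..v, F t) :
    saddlePrefactor u v = v / (2 * √2 * π * u * √(rexp v - 1 - u ^ 2 / 2 * rexp v)) := by
  have htwo : (2 : ℝ) ^ ((3 : ℝ) / 2) = 2 * √2 := by
    rw [Real.sqrt_eq_rpow, ← Real.rpow_one_add' zero_le_two (by norm_num)]
    norm_num
  rw [saddlePrefactor, htwo, neg_div, Real.rpow_neg (exp_sub_pos_of_saddle hu hv h).le,
    ← Real.sqrt_eq_rpow, ← div_eq_mul_inv, div_div]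

lemma sqrt_mul_sqrt_mul_sqrt_of_saddle (hu : 0 < u) (hv : 0 < v) (hr : 0 < r)
    (h : v ^ 2 / u ^ 2 = ∫ t in 0..v, F t) :
    √(2 * (u * r) * π) * √(expSlope v) * √(2 * π * ((u * r / v) ^ 3 * ∫ t in 0..v, varProfile t)) =
      r ^ 2 / saddlePrefactor u v := by
  have hexp := exp_sub_one_pos hv
  have hd := exp_sub_pos_of_saddle hu hv h
  rw [saddlePrefactor_eq hu hv h, integral_varProfile_of_saddle hu hv h, expSlope_of_ne hv.ne']
  set d := rexp v - 1 - u ^ 2 / 2 * rexp v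
  have hsq : 2 * (u * r) * π * ((rexp v - 1) / v) *
      (2 * π * ((u * r / v) ^ 3 * (2 * v ^ 2 / (u ^ 2 * (rexp v - 1)) * d))) =
      (r ^ 2 / (v / (2 * √2 * π * u * √d))) ^ 2 := by
    simp only [div_pow, mul_pow, Real.sq_sqrt zero_le_two, Real.sq_sqrt hd.le]
    field_simp
  rw [← Real.sqrt_mul (by positivity), ← Real.sqrt_mul (by positivity), hsq,
    Real.sqrt_sq (by positivity)]

lemma exponent_eq_of_saddle (hu : 0 < u) (hv : 0 < v) (hr : 0 < r)
    (h : v ^ 2 / u ^ 2 = ∫ t in 0..v, F t) :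
    r ^ 2 * (v / (u * r)) -
        (u * r * Real.log v - u * r + u * r / v * ∫ t in 0..v, logExpSlope t) =
      r * saddleExponent u v := by
  have hlog : logExpSlope v = Real.log (rexp v - 1) - Real.log v := by
    rw [logExpSlope, expSlope_of_ne hv.ne', Real.log_div (exp_sub_one_pos hv).ne' hv.ne']
  rw [integral_logExpSlope, ← h, hlog, saddleExponent]
  field_simp
  ring

end Saddle

section Asymptotics

variable {ι : Type*} {l : Filter ι} {E N : ι → ℕ}

lemma tendsto_atTop_of_le_div_sqrt {δ : ℝ} (hδ : 0 < δ) (hE : Tendsto E l atTop)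
    (h : ∀ᶠ i in l, δ ≤ N i / √(E i)) : Tendsto N l atTop := by
  have hsqrt := Real.tendsto_sqrt_atTop.comp ((tendsto_natCast_atTop_atTop (R := ℝ)).comp hE)
  rw [← tendsto_natCast_atTop_iff (R := ℝ)]
  refine tendsto_atTop_mono' l ?_ (hsqrt.const_mul_atTop hδ)
  filter_upwards [h, hE.eventually_gt_atTop 0] with i hi hEi
  exact (le_div_iff₀ (Real.sqrt_pos.2 (Nat.cast_pos.2 hEi))).1 hi

theorem q_isEquivalent_of_saddle [l.IsCountablyGenerated] {u v : ι → ℝ} {a b : ℝ} (ha : 0 < a)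
    (hN : Tendsto N l atTop) (hE : Tendsto E l atTop)
    (hu : ∀ᶠ i in l, 0 < u i ∧ N i = u i * √(E i)) (hv : ∀ᶠ i in l, v i ∈ Set.Icc a b)
    (hsaddle : ∀ᶠ i in l, v i ^ 2 / u i ^ 2 = ∫ t in 0..v i, F t) :
    (fun i => (q (E i) (N i) : ℝ)) ~[l] fun i =>
      saddlePrefactor (u i) (v i) / E i * rexp (√(E i) * saddleExponent (u i) (v i)) := by
  have hmean : ∀ᶠ i in l, (E i : ℝ) = (N i / v i) ^ 2 * ∫ t in 0..v i, F t := by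
    filter_upwards [hu, hv, hsaddle] with i ⟨hui, hNi⟩ hvi hi
    have hvi0 := ha.trans_le hvi.1
    rw [← hi, hNi, div_pow, mul_pow, Real.sq_sqrt (Nat.cast_nonneg _)]
    field_simp
  have hvar := isEquivalent_sqrt
    ((IsEquivalent.refl (u := fun _ => 2 * π)).mul (isEquivalent_geomSumVar ha hN hv))
  refine (q_isEquivalent_exp_div ha hN hv hmean).trans <|
    (IsEquivalent.refl.div ((isEquivalent_expProd ha hN hv).mul hvar)).congr_right ?_
  filter_upwards [hu, hv, hsaddle, hE.eventually_gt_atTop 0] with i ⟨hui, hNi⟩ hvi hi hEi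
  have hvi0 := ha.trans_le hvi.1
  have hr : 0 < √(E i : ℝ) := Real.sqrt_pos.2 (Nat.cast_pos.2 hEi)
  have hsqrt := sqrt_mul_sqrt_mul_sqrt_of_saddle hui hvi0 hr hi
  have hexponent := exponent_eq_of_saddle hui hvi0 hr hi
  rw [← hNi, Real.sq_sqrt (Nat.cast_nonneg _)] at hsqrt hexponent
  simp only [Pi.div_apply, Pi.mul_apply]
  rw [← hexponent, Real.exp_sub, mul_right_comm _ (rexp _), mul_right_comm _ (rexp _), hsqrt]
  field_simp

theorem tendsto_q_mul_exp_div_saddlePrefactor [l.IsCountablyGenerated] {v : ℝ → ℝ}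
    (hv : ∀ u, 0 < u → u < √2 → 0 < v u ∧ v u ^ 2 / u ^ 2 = ∫ t in 0..v u, F t)
    {δ w : ℝ} (hδ : 0 < δ) (hw : w < √2) (hE : Tendsto E l atTop) {u : ι → ℝ}
    (hu : ∀ i, N i / √(E i) = u i) (huIcc : ∀ᶠ i in l, u i ∈ Set.Icc δ w) :
    Tendsto (fun i => q (E i) (N i) * E i * rexp (-√(E i) * saddleExponent (u i) (v (u i))) /
      saddlePrefactor (u i) (v (u i))) l (𝓝 1) := by
  have hsaddle := huIcc.mono fun i hui => hv _ (hδ.trans_le hui.1) (hui.2.trans_lt hw)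
  have hNu : ∀ᶠ i in l, 0 < u i ∧ N i = u i * √(E i) := by
    filter_upwards [huIcc, hE.eventually_gt_atTop 0] with i hui hEi
    have hr := Real.sqrt_pos.2 (Nat.cast_pos.2 hEi)
    exact ⟨hδ.trans_le hui.1, (div_eq_iff hr.ne').1 (hu i)⟩
  have hN : Tendsto N l atTop :=
    tendsto_atTop_of_le_div_sqrt hδ hE (huIcc.mono fun i hui => (hu i).symm ▸ hui.1)
  have hvIcc : ∀ᶠ i in l, v (u i) ∈ Set.Icc (δ ^ 2) (1 / (1 / w ^ 2 - 1 / 2)) := by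
    filter_upwards [huIcc, hsaddle] with i hui hi
    exact mem_Icc_of_saddle hδ hw hui hi.1 hi.2
  have hq := q_isEquivalent_of_saddle (pow_pos hδ 2) hN hE hNu hvIcc
    (hsaddle.mono fun i => And.right)
  have hpos : ∀ᶠ i in l, (E i : ℝ) ≠ 0 ∧ saddlePrefactor (u i) (v (u i)) ≠ 0 := by
    filter_upwards [hNu, hsaddle, hE.eventually_gt_atTop 0] with i hui hi hEi
    exact ⟨(Nat.cast_pos.2 hEi).ne', (saddlePrefactor_pos hui.1 hi.1 hi.2).ne'⟩
  refine ((isEquivalent_iff_tendsto_one ?_).1 hq).congr' ?_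
  · filter_upwards [hpos] with i hi
    exact mul_ne_zero (div_ne_zero hi.2 hi.1) (Real.exp_pos _).ne'
  · filter_upwards [hpos] with i ⟨hEi, hfi⟩
    rw [Pi.div_apply, neg_mul, Real.exp_neg]
    field_simp

end Asymptotics

end DistinctPartitions

theorem stmt_14
    -- `v u` is the unique solution of the saddle-point equation for `0 < u < √2`
    (v : ℝ → ℝ)
    (hv : ∀ u : ℝ, 0 < u → u < Real.sqrt 2 →
      0 < v u ∧ (v u) ^ 2 / u ^ 2 = ∫ t in (0 : ℝ)..(v u), F t)
    (gbar fbar : ℝ → ℝ)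
    (hg : ∀ u : ℝ, gbar u = 2 * v u / u - u * Real.log (Real.exp (v u) - 1))
    (hf : ∀ u : ℝ, fbar u = v u / ((2 : ℝ) ^ ((3 : ℝ) / 2) * Real.pi * u) *
      (Real.exp (v u) - 1 - u ^ 2 / 2 * Real.exp (v u)) ^ (-(1 : ℝ) / 2))
    (δ : ℝ) (hδ : 0 < δ) (hδ2 : 2 * δ < Real.sqrt 2) (ε : ℝ) (hε : 0 < ε) :
    ∃ E₀ : ℕ, ∀ E : ℕ, E₀ ≤ E → ∀ N : ℕ, 0 < N →
      δ ≤ (N : ℝ) / Real.sqrt E → (N : ℝ) / Real.sqrt E ≤ Real.sqrt 2 - δ →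
      |(q E N : ℝ) * (E : ℝ) *
          Real.exp (-(Real.sqrt E) * gbar ((N : ℝ) / Real.sqrt E)) /
          fbar ((N : ℝ) / Real.sqrt E) - 1| ≤ ε := by
  let admissible : Set (ℕ × ℕ) := {p | p.2 / √p.1 ∈ Set.Icc δ (√2 - δ)}
  have hlim := DistinctPartitions.tendsto_q_mul_exp_div_saddlePrefactor
    (l := .comap Prod.fst .atTop ⊓ .principal admissible) hv hδ (sub_lt_self _ hδ)
    (Filter.tendsto_comap.mono_left inf_le_left) (fun _ => rfl)
    (Filter.mem_inf_of_right (Filter.mem_principal_self _))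
  have hbound := hlim.eventually (Metric.closedBall_mem_nhds 1 hε)
  rw [Filter.eventually_inf_principal, Filter.eventually_comap, Filter.eventually_atTop] at hbound
  obtain ⟨E₀, hE₀⟩ := hbound
  refine ⟨E₀, fun E hE N _ hδN hNδ => ?_⟩
  rw [hg, hf]
  exact hE₀ E hE (E, N) rfl ⟨hδN, hNδ⟩
end

section
/- For every δ > 0 and every ε > 0, there exists E₀ such that for all integers E ≥ E₀ and all positive integers N with δ ≤ N/√E ≤ 1/δ, one has | P(E,N) · E · exp(-√E · g(N/√E)) / f(N/√E) - 1 | ≤ ε. -/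
/-- `P E N`: the number of partitions of `E` into at most `N` positive integer parts. -/
def P (E N : ℕ) : ℕ :=
  (Finset.univ.filter fun p : Nat.Partition E => p.parts.card ≤ N).card

/-- The function `t ↦ t / (e^t - 1)`, extended continuously by the value `1` at `t = 0`. -/
noncomputable def G (t : ℝ) : ℝ := if t = 0 then 1 else t / (Real.exp t - 1)

/-!
By Cauchy's formula `P(E, N)` is the integral of the generating function `∏ (1 - qᵏ)⁻¹`, `k ≤ N`,
over the circle `q = e^(-α + iθ)`, where `α = v / N` is the saddle point. On this circle the
generating function is its value at `q = e^(-α)` times the characteristic function of `∑ k Xₖ`,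
where the `Xₖ` are independent geometric variables of ratio `e^(-αk)`; the equation satisfied by `v`
says that the mean of this sum is `E` up to `O(N)`, which is negligible against its standard
deviation, of order `N ^ (3 / 2)`. The value at `e^(-α)` is found from Stirling's formula and the
Euler-Maclaurin formula for `log (t / (1 - e⁻ᵗ))`, which is smooth at `0`, and the integral from a
local limit theorem: the rescaled characteristic function converges to that of a Gaussian and is
dominated by `1 / (1 + b x²)`.

The limit is uniform in `u = N / √E` because `v` stays in a compact subset of `(0, ∞)` when `u`
does, so that every sequence of pairs `(E, N)` has a subsequence along which `v` converges.
-/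

namespace BoundedPartitions

open Filter Finset MeasureTheory Real Topology
open scoped Interval

/-! ### The generating function of partitions -/

theorem map_succ_map_pred {s : Multiset ℕ} (hs : ∀ a ∈ s, 0 < a) :
    (s.map Nat.pred).map Nat.succ = s := by
  rw [Multiset.map_map]
  exact (Multiset.map_congr rfl fun a ha => Nat.succ_pred_eq_of_pos (hs a ha)).trans s.map_id

theorem sum_map_succ (s : Multiset ℕ) : (s.map Nat.succ).sum = s.sum + s.card := by
  simp only [Nat.succ_eq_add_one, Multiset.sum_map_add, Multiset.map_id', Multiset.map_const',
    Multiset.sum_replicate, smul_eq_mul, mul_one]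

theorem filter_ne_zero_add_replicate (s : Multiset ℕ) :
    s.filter (· ≠ 0) + Multiset.replicate (s.card - (s.filter (· ≠ 0)).card) 0 = s := by
  have hsplit : s.filter (· ≠ 0) + Multiset.replicate (s.count 0) 0 = s := by
    simpa only [not_not, Multiset.filter_eq'] using Multiset.filter_add_not (· ≠ 0) s
  have hcard := congrArg Multiset.card hsplit
  rw [Multiset.card_add, Multiset.card_replicate] at hcard
  rwa [← hcard, Nat.add_sub_cancel_left]

theorem card_partition_card_parts_eq (M N : ℕ) :
    #{p : Nat.Partition (M + N) | p.parts.card = N} = P M N := by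
  have hsum (p : Nat.Partition (M + N)) (hp : p.parts.card = N) :
      (p.parts.map Nat.pred).sum = M := by
    have h := sum_map_succ (p.parts.map Nat.pred)
    rw [map_succ_map_pred fun _ => p.parts_pos, p.parts_sum, Multiset.card_map] at h
    omega
  refine Finset.card_bij'
    (fun p hp => Nat.Partition.ofSums M (p.parts.map Nat.pred) (hsum p (by simpa using hp)))
    (fun q hq => ⟨(q.parts + Multiset.replicate (N - q.parts.card) 0).map Nat.succ, ?_, ?_⟩)
    ?_ ?_ ?_ ?_
  · intro i hi
    obtain ⟨a, -, rfl⟩ := Multiset.mem_map.1 hi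
    exact a.succ_pos
  · have hcard := (Finset.mem_filter.1 hq).2
    rw [sum_map_succ, Multiset.sum_add, q.parts_sum, Multiset.card_add,
      Multiset.sum_replicate, Multiset.card_replicate, smul_zero]
    omega
  · intro p hp
    have hle := Multiset.card_le_card (Multiset.filter_le (· ≠ 0) (p.parts.map Nat.pred))
    rw [Multiset.card_map, (Finset.mem_filter.1 hp).2] at hle
    simpa using hle
  · intro q hq
    have hcard := (Finset.mem_filter.1 hq).2
    simpa using Nat.add_sub_cancel' hcard
  · intro p hp
    have hfill := filter_ne_zero_add_replicate (p.parts.map Nat.pred)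
    rw [Multiset.card_map, (Finset.mem_filter.1 hp).2] at hfill
    ext1
    simp only [Nat.Partition.ofSums_parts, hfill]
    exact map_succ_map_pred fun _ => p.parts_pos
  · intro q hq
    have hpos : q.parts.filter (· ≠ 0) = q.parts :=
      Multiset.filter_eq_self.2 fun a ha => (q.parts_pos ha).ne'
    ext1
    simp [Multiset.filter_add, hpos, Multiset.filter_eq_nil, Multiset.mem_replicate]

theorem P_succ_right (E N : ℕ) :
    P E (N + 1) = P E N + #{p : Nat.Partition E | p.parts.card = N + 1} := by
  simp only [P, Nat.le_succ_iff]
  rw [Finset.filter_or, Finset.card_union_of_disjoint]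
  exact Finset.disjoint_filter.2 fun p _ hle heq => by omega

theorem P_add_succ (M N : ℕ) :
    P (M + (N + 1)) (N + 1) = P (M + (N + 1)) N + P M (N + 1) := by
  rw [P_succ_right, card_partition_card_parts_eq]

theorem P_succ_of_le {E N : ℕ} (h : E ≤ N) : P E (N + 1) = P E N := by
  rw [P_succ_right, Nat.add_eq_left, Finset.card_eq_zero, Finset.filter_eq_empty_iff]
  intro p _ hp
  have hcard := Multiset.card_nsmul_le_sum (s := p.parts) (a := 1) fun _ => p.parts_pos
  rw [hp, p.parts_sum, smul_eq_mul] at hcard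
  omega

theorem P_zero_right (E : ℕ) : P E 0 = if E = 0 then 1 else 0 := by
  rcases eq_or_ne E 0 with rfl | hE
  · simp [P]
  · rw [if_neg hE, P, Finset.card_eq_zero, Finset.filter_eq_empty_iff]
    intro p _ hp
    rw [Nat.le_zero, Multiset.card_eq_zero] at hp
    exact hE (by rw [← p.parts_sum, hp, Multiset.sum_zero])

theorem P_le_choose (E N : ℕ) : P E N ≤ (E + N).choose N := by
  induction N generalizing E with
  | zero => rw [P_zero_right]; split_ifs <;> simp
  | succ N ihN =>
    induction E using Nat.strong_induction_on with
    | _ E ihE =>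
      rcases le_or_gt E N with h | h
      · rw [P_succ_of_le h]
        exact (ihN E).trans (by rw [← add_assoc, Nat.choose_succ_succ]; exact Nat.le_add_right _ _)
      · obtain ⟨M, rfl⟩ := Nat.exists_eq_add_of_le' h
        have hM := (ihE M (by omega)).trans
          (Nat.choose_le_choose (N + 1) (show M + (N + 1) ≤ M + (N + 1) + N by omega))
        rw [P_add_succ, ← add_assoc (M + (N + 1)), Nat.choose_succ_succ]
        exact add_le_add (ihN _) hM

theorem summable_P_mul_pow {q : ℂ} (hq : ‖q‖ < 1) (N : ℕ) :
    Summable fun E => ‖(P E N : ℂ) * q ^ E‖ := by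
  have hgeom := summable_choose_mul_geometric_of_norm_lt_one N
    (r := ‖q‖) (by rwa [norm_norm])
  refine hgeom.of_nonneg_of_le (fun _ => norm_nonneg _) fun E => ?_
  rw [norm_mul, norm_pow, Complex.norm_natCast]
  gcongr
  exact P_le_choose E N

/-- The generating function `∏ₖ (1 - qᵏ)⁻¹`, `1 ≤ k ≤ N`, of the partitions into at most `N` parts,
used at a positive real `q` and on the complex circle through it. -/
noncomputable def partsGenFun {𝕜 : Type*} [Field 𝕜] (N : ℕ) (q : 𝕜) : 𝕜 :=
  ∏ k ∈ range N, (1 - q ^ (k + 1))⁻¹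

theorem tsum_P_mul_pow {q : ℂ} (hq : ‖q‖ < 1) (N : ℕ) :
    ∑' E, (P E N : ℂ) * q ^ E = partsGenFun N q := by
  induction N with
  | zero =>
    refine (tsum_eq_single 0 fun E hE => ?_).trans ?_
    · simp [P_zero_right, hE]
    · simp [P_zero_right, partsGenFun]
  | succ N ih =>
    have hne : 1 - q ^ (N + 1) ≠ 0 := sub_ne_zero.2 fun h =>
      (pow_lt_one₀ (norm_nonneg q) hq N.succ_ne_zero).ne (by rw [← norm_pow, ← h, norm_one])
    have hsucc := (summable_P_mul_pow hq (N + 1)).of_norm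
    have hN := (summable_P_mul_pow hq N).of_norm
    have hhead : ∑ E ∈ range (N + 1), (P E (N + 1) : ℂ) * q ^ E =
        ∑ E ∈ range (N + 1), (P E N : ℂ) * q ^ E :=
      sum_congr rfl fun E hE => by rw [P_succ_of_le (mem_range_succ_iff.1 hE)]
    have htail : ∑' M, (P (M + (N + 1)) (N + 1) : ℂ) * q ^ (M + (N + 1)) =
        ∑' M, (P (M + (N + 1)) N : ℂ) * q ^ (M + (N + 1)) +
          q ^ (N + 1) * ∑' M, (P M (N + 1) : ℂ) * q ^ M := by
      rw [← tsum_mul_left, ← ((summable_nat_add_iff (N + 1)).2 hN).tsum_add (hsucc.mul_left _)]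
      refine tsum_congr fun M => ?_
      rw [P_add_succ]
      push_cast
      ring
    rw [partsGenFun, prod_range_succ, ← partsGenFun, ← ih, eq_mul_inv_iff_mul_eq₀ hne]
    linear_combination hhead + htail - hsucc.sum_add_tsum_nat_add (N + 1) +
      hN.sum_add_tsum_nat_add (N + 1)

theorem integral_exp_int_mul_I (n : ℤ) :
    ∫ θ in (-π)..π, Complex.exp (n * (θ * Complex.I)) = if n = 0 then 2 * (π : ℂ) else 0 := by
  split_ifs with hn
  · simp [hn, two_mul]
  · have hne : (n : ℂ) * Complex.I ≠ 0 := mul_ne_zero (mod_cast hn) Complex.I_ne_zero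
    have hperiodic : Complex.exp (n * Complex.I * (π : ℝ)) =
        Complex.exp (n * Complex.I * ((-π : ℝ) : ℂ)) :=
      Complex.exp_eq_exp_iff_exists_int.2 ⟨n, by push_cast; ring⟩
    calc ∫ θ in (-π)..π, Complex.exp (n * (θ * Complex.I))
        = ∫ θ in (-π)..π, Complex.exp (n * Complex.I * (θ : ℝ)) := by congr! 3; ring
      _ = 0 := by rw [integral_exp_mul_complex hne, hperiodic, sub_self, zero_div]

theorem integral_tsum_mul_exp {b : ℕ → ℂ} (hb : Summable fun n => ‖b n‖) (E : ℕ) :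
    ∫ θ in (-π)..π, (∑' n, b n * Complex.exp (n * (θ * Complex.I))) *
      Complex.exp (-(E * (θ * Complex.I))) = 2 * π * b E := by
  have hnorm (n : ℕ) (θ : ℝ) : ‖Complex.exp (n * (θ * Complex.I))‖ = 1 := by
    simp [Complex.norm_exp]
  have hnorm' (θ : ℝ) : ‖Complex.exp (-(E * (θ * Complex.I)))‖ = 1 := by
    simp [Complex.norm_exp]
  have hsum (θ : ℝ) : Summable fun n => b n * Complex.exp (n * (θ * Complex.I)) :=
    .of_norm (by simpa only [norm_mul, hnorm, mul_one] using hb)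
  have hswap : HasSum (fun n : ℕ => ∫ θ in (-π)..π, b n * Complex.exp (n * (θ * Complex.I)) *
        Complex.exp (-(E * (θ * Complex.I))))
      (∫ θ in (-π)..π, (∑' n, b n * Complex.exp (n * (θ * Complex.I))) *
        Complex.exp (-(E * (θ * Complex.I)))) := by
    refine intervalIntegral.hasSum_integral_of_dominated_convergence (fun n _ => ‖b n‖)
      (fun n => Continuous.aestronglyMeasurable (by fun_prop)) (fun n => ?_)
      (.of_forall fun _ _ => hb) intervalIntegrable_const
      (.of_forall fun θ _ => (hsum θ).hasSum.mul_right _)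
    refine .of_forall fun θ _ => le_of_eq ?_
    rw [norm_mul, norm_mul, hnorm, hnorm', mul_one, mul_one]
  have hterm (n : ℕ) : ∫ θ in (-π)..π, b n * Complex.exp (n * (θ * Complex.I)) *
      Complex.exp (-(E * (θ * Complex.I))) = if n = E then 2 * π * b E else 0 := by
    calc _ = ∫ θ in (-π)..π, b n * Complex.exp (((n - E : ℤ) : ℂ) * (θ * Complex.I)) := by
          congr! 2 with θ
          rw [mul_assoc, ← Complex.exp_add]
          congr 2
          push_cast
          ring
      _ = _ := by
          simp only [intervalIntegral.integral_const_mul, integral_exp_int_mul_I, sub_eq_zero,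
            Nat.cast_inj]
          split_ifs with h
          · rw [h, mul_comm]
          · rw [mul_zero]
  rw [← hswap.tsum_eq]
  simp only [hterm, tsum_ite_eq]

theorem P_mul_exp_eq_integral {α : ℝ} (hα : 0 < α) (E N : ℕ) :
    2 * π * (P E N * Complex.exp (-α * E)) =
      ∫ θ in (-π)..π, partsGenFun N (Complex.exp (-α + θ * Complex.I)) *
        Complex.exp (-(E * (θ * Complex.I))) := by
  have hnorm (θ : ℝ) : ‖Complex.exp (-α + θ * Complex.I)‖ < 1 := by
    simpa [Complex.norm_exp] using hα
  have hsummable : Summable fun n => ‖(P n N : ℂ) * Complex.exp (-α * n)‖ := by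
    refine (summable_P_mul_pow (hnorm 0) N).congr fun n => ?_
    rw [← Complex.exp_nat_mul]
    congr 3
    push_cast
    ring
  rw [← integral_tsum_mul_exp hsummable]
  congr! 3 with θ
  rw [← tsum_P_mul_pow (hnorm θ)]
  refine tsum_congr fun n => ?_
  rw [mul_assoc, ← Complex.exp_add, ← Complex.exp_nat_mul]
  congr 2
  ring

/-! ### The functions of Bose-Einstein statistics -/

theorem exp_sub_one_mul_G (t : ℝ) : (exp t - 1) * G t = t := by
  rcases eq_or_ne t 0 with rfl | ht
  · simp
  · rw [G, if_neg ht, mul_div_cancel₀ _ (sub_ne_zero.2 (mt (exp_eq_one_iff t).1 ht))]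

theorem G_zero : G 0 = 1 := if_pos rfl

theorem G_eq_inv_dslope : G = (dslope exp 0)⁻¹ := by
  funext t
  rcases eq_or_ne t 0 with rfl | ht
  · simp [G_zero]
  · simp [G, ht, dslope_of_ne, slope_def_field]

theorem G_pos (t : ℝ) : 0 < G t := by
  rcases lt_trichotomy t 0 with ht | rfl | ht
  · rw [G, if_neg ht.ne]
    exact div_pos_of_neg_of_neg ht (sub_neg.2 (exp_lt_one_iff.2 ht))
  · simp [G_zero]
  · rw [G, if_neg ht.ne']
    exact div_pos ht (sub_pos.2 (one_lt_exp_iff.2 ht))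

theorem G_neg (t : ℝ) : G (-t) = exp t * G t := by
  rcases eq_or_ne t 0 with rfl | ht
  · simp
  · have hneg := exp_sub_one_mul_G (-t)
    have hne : exp t - 1 ≠ 0 := sub_ne_zero.2 (mt (exp_eq_one_iff t).1 ht)
    refine mul_left_cancel₀ hne ?_
    rw [exp_neg] at hneg
    field_simp at hneg
    linear_combination -hneg - exp t * exp_sub_one_mul_G t

theorem G_neg_eq_div {t : ℝ} (ht : t ≠ 0) : G (-t) = t / (1 - exp (-t)) := by
  rw [G, if_neg (neg_ne_zero.2 ht), ← neg_sub 1, neg_div_neg_eq]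

theorem analyticAt_G (t : ℝ) : AnalyticAt ℝ G t := by
  have hslope : AnalyticAt ℝ (dslope exp 0) t := by
    rcases eq_or_ne t 0 with rfl | ht
    · obtain ⟨p, hp⟩ := analyticAt_rexp (x := (0 : ℝ))
      exact hp.has_fpower_series_dslope_fslope.analyticAt
    · refine AnalyticAt.congr ?_ (dslope_eventuallyEq_slope_of_ne exp ht).symm
      simp only [slope_fun_def_field]
      fun_prop (disch := simpa [sub_eq_zero])
  rw [G_eq_inv_dslope]
  refine hslope.inv fun h => (G_pos t).ne' ?_
  rw [G_eq_inv_dslope, Pi.inv_apply, h, inv_zero]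

theorem continuous_G : Continuous G :=
  continuous_iff_continuousAt.2 fun t => (analyticAt_G t).continuousAt

/-- Einstein's function `t² eᵗ / (eᵗ - 1)²`, the variance of `t` times a geometric variable of
mean `1 / (eᵗ - 1)`, written so that it also makes sense at `t = 0`. -/
noncomputable def einstein (t : ℝ) : ℝ := G t * G (-t)

theorem einstein_pos (t : ℝ) : 0 < einstein t := mul_pos (G_pos t) (G_pos (-t))

theorem contDiff_G {n : WithTop ℕ∞} : ContDiff ℝ n G :=
  AnalyticOnNhd.contDiff fun t _ => analyticAt_G t

theorem contDiff_einstein {n : WithTop ℕ∞} : ContDiff ℝ n einstein :=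
  contDiff_G.mul (contDiff_G.comp contDiff_neg)

theorem continuous_einstein : Continuous einstein :=
  contDiff_einstein.continuous (n := 0)

theorem contDiff_log_G_neg {n : WithTop ℕ∞} : ContDiff ℝ n fun t => log (G (-t)) :=
  (contDiff_G.comp contDiff_neg).log fun t => (G_pos (-t)).ne'

theorem mul_deriv_G (t : ℝ) : t * deriv G t = G t - einstein t := by
  have hG := (analyticAt_G t).differentiableAt.hasDerivAt
  have hprod := ((Real.hasDerivAt_exp t).sub_const 1).mul hG
  rw [show (fun s => exp s - 1) * G = id from funext exp_sub_one_mul_G] at hprod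
  have hderiv := hprod.unique (hasDerivAt_id t)
  rw [einstein, G_neg]
  linear_combination G t * hderiv - deriv G t * exp_sub_one_mul_G t

theorem one_le_G_neg {t : ℝ} (ht : 0 < t) : 1 ≤ G (-t) := by
  rw [G_neg_eq_div ht.ne', one_le_div (sub_pos.2 (exp_lt_one_iff.2 (neg_neg_iff_pos.2 ht)))]
  linarith [add_one_le_exp (-t)]

theorem antitoneOn_G : AntitoneOn G (Set.Ici 0) := by
  refine antitoneOn_of_deriv_nonpos (convex_Ici 0) continuous_G.continuousOn
    (fun t _ => (analyticAt_G t).differentiableAt.differentiableWithinAt) fun t ht => ?_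
  rw [interior_Ici, Set.mem_Ioi] at ht
  refine nonpos_of_mul_nonpos_right (a := t) ?_ ht
  rw [mul_deriv_G, einstein, sub_nonpos]
  exact le_mul_of_one_le_right (G_pos t).le (one_le_G_neg ht)

theorem G_le_one {t : ℝ} (ht : 0 ≤ t) : G t ≤ 1 :=
  (antitoneOn_G Set.self_mem_Ici ht ht).trans_eq G_zero

theorem mul_deriv_log_G_neg (t : ℝ) : t * deriv (fun t => log (G (-t))) t = 1 - G t := by
  have hne := (G_pos (-t)).ne'
  have hG : HasDerivAt (fun t => G (-t)) (-deriv G (-t)) t := by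
    simpa [Function.comp_def] using
      (analyticAt_G (-t)).differentiableAt.hasDerivAt.comp t (hasDerivAt_neg t)
  have hmul := mul_deriv_G (-t)
  rw [einstein, neg_neg] at hmul
  rw [(hG.log hne).deriv]
  field_simp
  linear_combination hmul

theorem integral_mul_deriv_of_contDiff {f : ℝ → ℝ} (hf : ContDiff ℝ 1 f) (v : ℝ) :
    ∫ t in (0 : ℝ)..v, t * deriv f t = v * f v - ∫ t in (0 : ℝ)..v, f t := by
  have h := intervalIntegral.integral_mul_deriv_eq_deriv_mul (a := 0) (b := v)
    (u := id) (v := f) (u' := fun _ => 1) (v' := deriv f) (fun t _ => hasDerivAt_id t)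
    (fun t _ => (hf.differentiable one_ne_zero t).hasDerivAt) intervalIntegrable_const
    (hf.continuous_deriv_one.intervalIntegrable 0 v)
  simpa using h

theorem integral_einstein (v : ℝ) :
    ∫ t in (0 : ℝ)..v, einstein t = 2 * (∫ t in (0 : ℝ)..v, G t) - v * G v := by
  have h := integral_mul_deriv_of_contDiff contDiff_G v
  simp only [mul_deriv_G] at h
  rw [intervalIntegral.integral_sub (continuous_G.intervalIntegrable 0 v)
    (continuous_einstein.intervalIntegrable 0 v)] at h
  linarith

theorem integral_log_G_neg (v : ℝ) :
    ∫ t in (0 : ℝ)..v, log (G (-t)) = v * log (G (-v)) - v + ∫ t in (0 : ℝ)..v, G t := by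
  have h := integral_mul_deriv_of_contDiff contDiff_log_G_neg v
  simp only [mul_deriv_log_G_neg] at h
  rw [intervalIntegral.integral_sub intervalIntegrable_const
    (continuous_G.intervalIntegrable 0 v), integral_one, sub_zero] at h
  linarith

/-! ### The generating function on the real axis -/

theorem abs_iteratedDerivWithin_two_le {f : ℝ → ℝ} (hf : ContDiff ℝ 2 f) {v ζ : ℝ} (hv : 0 < v)
    (hζ : ∀ t ∈ Set.Icc 0 v, |iteratedDeriv 2 f t| ≤ ζ) (t : ℝ) :
    |iteratedDerivWithin 2 f [[0, v]] t| ≤ ζ := by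
  rw [Set.uIcc_of_le hv.le]
  by_cases ht : t ∈ Set.Icc 0 v
  · rw [iteratedDerivWithin_eq_iteratedDeriv (uniqueDiffOn_Icc hv) hf.contDiffAt ht]
    exact hζ t ht
  · rw [iteratedDerivWithin_succ,
      derivWithin_zero_of_notMem_closure (by rwa [closure_Icc]), abs_zero]
    exact (abs_nonneg _).trans (hζ 0 (Set.left_mem_Icc.2 hv.le))

theorem sum_eq_trapezoidal_integral (f : ℝ → ℝ) {v : ℝ} (hv : v ≠ 0) {N : ℕ} (hN : 0 < N) :
    ∑ k ∈ range N, f (v / N * (k + 1)) =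
      N / v * trapezoidal_integral f N 0 v + (f v - f 0) / 2 := by
  obtain ⟨M, rfl⟩ := Nat.exists_eq_add_of_le' hN
  have hM : ((M + 1 : ℕ) : ℝ) ≠ 0 := by positivity
  have hlast : v / (M + 1 : ℕ) * (M + 1) = v := by push_cast at hM ⊢; field_simp
  have hterm (k : ℕ) : 0 + (k + 1 : ℝ) * (v - 0) / (M + 1 : ℕ) = v / (M + 1 : ℕ) * (k + 1) := by
    ring
  have hscale (x : ℝ) : (M + 1 : ℕ) / v * ((v - 0) / (M + 1 : ℕ) * x) = x := by field_simp; ring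
  rw [trapezoidal_integral, hscale, sum_range_succ, hlast, Nat.add_sub_cancel]
  simp only [hterm]
  ring

theorem abs_sum_sub_integral_le {f : ℝ → ℝ} (hf : ContDiff ℝ 2 f) {v ζ : ℝ} (hv : 0 < v)
    (hζ : ∀ t ∈ Set.Icc 0 v, |iteratedDeriv 2 f t| ≤ ζ) {N : ℕ} (hN : 0 < N) :
    |∑ k ∈ range N, f (v / N * (k + 1)) - N / v * (∫ t in (0 : ℝ)..v, f t) - (f v - f 0) / 2| ≤
      v ^ 2 * ζ / (12 * N) := by
  have herror := trapezoidal_error_le_of_c2 hf.contDiffOn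
    (abs_iteratedDerivWithin_two_le hf hv hζ) hN
  rw [sub_zero, abs_of_pos hv] at herror
  have hNpos : (0 : ℝ) < N := Nat.cast_pos.2 hN
  calc _ = |N / v * trapezoidal_error f N 0 v| := by
        rw [sum_eq_trapezoidal_integral f hv.ne' hN, trapezoidal_error]
        congr 1
        ring
    _ = N / v * |trapezoidal_error f N 0 v| := by rw [abs_mul, abs_of_pos (div_pos hNpos hv)]
    _ ≤ N / v * (v ^ 3 * ζ / (12 * N ^ 2)) := by gcongr
    _ = v ^ 2 * ζ / (12 * N) := by field_simp

theorem tendsto_sum_sub_integral {ι : Type*} {l : Filter ι} {f : ℝ → ℝ} (hf : ContDiff ℝ 2 f)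
    {N : ι → ℕ} {v : ι → ℝ} {w : ℝ} (hN : Tendsto N l atTop) (hv : Tendsto v l (𝓝 w))
    (hw : 0 < w) :
    Tendsto (fun n => ∑ k ∈ range (N n), f (v n / N n * (k + 1)) -
      N n / v n * ∫ t in (0 : ℝ)..v n, f t) l (𝓝 ((f w - f 0) / 2)) := by
  obtain ⟨ζ, hζ⟩ := (isCompact_Icc (a := 0) (b := w + 1)).exists_bound_of_continuousOn
    (hf.continuous_iteratedDeriv' 2).continuousOn
  have hbound : Tendsto (fun n => v n ^ 2 * ζ / (12 * N n)) l (𝓝 0) :=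
    ((hv.pow 2).mul_const ζ).div_atTop
      ((tendsto_natCast_atTop_atTop.comp hN).const_mul_atTop (by norm_num))
  have herror : Tendsto (fun n => ∑ k ∈ range (N n), f (v n / N n * (k + 1)) -
      N n / v n * (∫ t in (0 : ℝ)..v n, f t) - (f (v n) - f 0) / 2) l (𝓝 0) := by
    refine squeeze_zero_norm' ?_ hbound
    filter_upwards [hv.eventually (lt_mem_nhds hw), hN.eventually_gt_atTop 0,
      hv.eventually (gt_mem_nhds (lt_add_one w))] with n hv0 hN0 hv1
    exact abs_sum_sub_integral_le hf hv0
      (fun t ht => hζ t (Set.Icc_subset_Icc_right hv1.le ht)) hN0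
  have hends := (((hf.continuous.tendsto w).comp hv).sub_const (f 0)).div_const 2
  simpa using herror.add hends

theorem partsGenFun_exp_neg_eq {α : ℝ} (hα : 0 < α) (N : ℕ) :
    partsGenFun N (exp (-α)) =
      exp (∑ k ∈ range N, log (G (-(α * (k + 1))))) / (α ^ N * N.factorial) := by
  have hterm (k : ℕ) : (1 - exp (-α) ^ (k + 1))⁻¹ =
      exp (log (G (-(α * (k + 1))))) / (α * (k + 1 : ℕ)) := by
    have hpos : 0 < α * (k + 1 : ℕ) := by positivity
    rw [exp_log (G_pos _), ← Nat.cast_add_one, G_neg_eq_div hpos.ne', div_div_cancel_left' hpos.ne',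
      ← exp_nat_mul, mul_neg, mul_comm]
  rw [partsGenFun, exp_sum, prod_congr rfl fun k _ => hterm k, prod_div_distrib,
    prod_mul_distrib, prod_const, card_range, ← prod_range_add_one_eq_factorial, Nat.cast_prod]

theorem tendsto_stirling_ratio :
    Tendsto (fun N : ℕ => exp (-N) * N ^ N * √(2 * π * N) / N.factorial) atTop (𝓝 1) := by
  have h := (Asymptotics.isEquivalent_iff_tendsto_one
    (.of_forall fun N => by positivity)).1 Stirling.factorial_isEquivalent_stirling.symm
  refine h.congr fun N => ?_
  rw [Pi.div_apply, div_pow, ← exp_nat_mul, mul_one, exp_neg, mul_right_comm 2 π]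
  ring

theorem partsGenFun_exp_neg_mul_eq {v : ℝ} (hv : 0 < v) {N : ℕ} (hN : 0 < N) :
    partsGenFun N (exp (-(v / N))) *
        (exp (-(N / v * ∫ t in (0 : ℝ)..v, G t)) * (1 - exp (-v)) ^ N) =
      exp (∑ k ∈ range N, log (G (-(v / N * (k + 1)))) -
        N / v * ∫ t in (0 : ℝ)..v, log (G (-t))) * (exp (-N) * N ^ N / N.factorial) := by
  have hNpos : (0 : ℝ) < N := Nat.cast_pos.2 hN
  have hG : 1 - exp (-v) = v / G (-v) := by
    rw [G_neg_eq_div hv.ne', div_div_cancel₀ hv.ne']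
  have hintegral : N / v * ∫ t in (0 : ℝ)..v, log (G (-t)) =
      N * log (G (-v)) - N + N / v * ∫ t in (0 : ℝ)..v, G t := by
    rw [integral_log_G_neg]
    field_simp
  have hexp : exp (-(N * log (G (-v)))) = (G (-v) ^ N)⁻¹ := by
    rw [exp_neg, exp_nat_mul, exp_log (G_pos _)]
  rw [partsGenFun_exp_neg_eq (div_pos hv hNpos), hG, hintegral]
  generalize (∑ k ∈ range N, log (G (-(v / N * (k + 1))))) = S
  rw [show S - (N * log (G (-v)) - N + N / v * ∫ t in (0 : ℝ)..v, G t) =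
    S + -(N * log (G (-v))) + N + -(N / v * ∫ t in (0 : ℝ)..v, G t) by ring, exp_add, exp_add,
    exp_add, hexp, exp_neg (N : ℝ), div_pow, div_pow]
  field_simp [(G_pos (-v)).ne']

theorem tendsto_partsGenFun {ι : Type*} {l : Filter ι} {N : ι → ℕ} {v : ι → ℝ} {w : ℝ}
    (hN : Tendsto N l atTop) (hv : Tendsto v l (𝓝 w)) (hw : 0 < w) :
    Tendsto (fun n => partsGenFun (N n) (exp (-(v n / N n))) *
      (exp (-(N n / v n * ∫ t in (0 : ℝ)..v n, G t)) * (1 - exp (-v n)) ^ N n) *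
        √(2 * π * N n)) l (𝓝 √(G (-w))) := by
  have hsum := (continuous_exp.tendsto _).comp
    (tendsto_sum_sub_integral contDiff_log_G_neg hN hv hw)
  have hlimit : exp ((log (G (-w)) - log (G (-0))) / 2) = √(G (-w)) := by
    rw [neg_zero, G_zero, log_one, sub_zero, exp_half, exp_log (G_pos _)]
  rw [hlimit] at hsum
  have hprod := hsum.mul (tendsto_stirling_ratio.comp hN)
  rw [mul_one] at hprod
  refine hprod.congr' ?_
  filter_upwards [hv.eventually (lt_mem_nhds hw), hN.eventually_gt_atTop 0] with n hv0 hN0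
  rw [partsGenFun_exp_neg_mul_eq hv0 hN0]
  simp only [Function.comp_apply]
  ring

/-! ### The local limit theorem -/

/-- The characteristic function at `y` of the geometric distribution of mean `m` on `ℕ`. -/
noncomputable def geomCharFun (m y : ℝ) : ℂ :=
  (1 - m * (Complex.exp (y * Complex.I) - 1))⁻¹

theorem norm_inv_geomCharFun_sq (m y : ℝ) :
    ‖(geomCharFun m y)⁻¹‖ ^ 2 = 1 + 2 * m * (1 + m) * (1 - cos y) := by
  rw [geomCharFun, inv_inv, ← Complex.normSq_eq_norm_sq, Complex.normSq_apply, Complex.exp_mul_I,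
    ← Complex.ofReal_cos, ← Complex.ofReal_sin]
  simp only [Complex.sub_re, Complex.sub_im, Complex.mul_re, Complex.mul_im, Complex.add_re,
    Complex.add_im, Complex.one_re, Complex.one_im, Complex.ofReal_re, Complex.ofReal_im,
    Complex.I_re, Complex.I_im]
  linear_combination m ^ 2 * sin_sq_add_cos_sq y

theorem geomCharFun_ne_zero {m : ℝ} (hm : 0 ≤ m) (y : ℝ) : geomCharFun m y ≠ 0 := by
  intro h
  have hsq := norm_inv_geomCharFun_sq m y
  rw [h, inv_zero, norm_zero] at hsq
  nlinarith [mul_nonneg (mul_nonneg hm (by linarith : 0 ≤ 1 + m)) (sub_nonneg.2 (cos_le_one y))]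

theorem norm_log_one_sub_inv_sub_quadratic_le {z : ℂ} (hz : ‖z‖ ≤ 1 / 2) :
    ‖Complex.log (1 - z)⁻¹ - (z + z ^ 2 / 2)‖ ≤ ‖z‖ ^ 3 := by
  have htaylor : Complex.logTaylor (2 + 1) (-z) = -(z + z ^ 2 / 2) := by
    simp only [Complex.logTaylor_succ, Complex.logTaylor_zero, Pi.add_apply]
    push_cast
    ring
  have hinv : (1 - ‖z‖)⁻¹ ≤ 2 := inv_le_of_inv_le₀ two_pos (by linarith)
  calc _ ≤ ‖z‖ ^ (2 + 1) * (1 - ‖z‖)⁻¹ / ((2 : ℕ) + 1) := by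
        rw [← neg_neg (z + z ^ 2 / 2), ← htaylor, sub_neg_eq_add]
        exact Complex.norm_log_one_sub_inv_add_logTaylor_neg_le 2 (by linarith)
    _ ≤ ‖z‖ ^ (2 + 1) * 3 / ((2 : ℕ) + 1) := by gcongr; linarith
    _ = ‖z‖ ^ 3 := by push_cast; ring

theorem norm_exp_mul_I_sub_quadratic_le {y : ℝ} (hy : |y| ≤ 1 / 2) :
    ‖Complex.exp (y * Complex.I) - 1 - y * Complex.I + y ^ 2 / 2‖ ≤ 2 * |y| ^ 3 := by
  have hexp : exp |y| ≤ 2 := by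
    rw [← le_log_iff_exp_le two_pos]
    linarith [log_two_gt_d9]
  calc _ = ‖Complex.exp (y * Complex.I) -
          ∑ j ∈ range 3, (y * Complex.I) ^ j / j.factorial‖ := by
        simp only [sum_range_succ, sum_range_zero, mul_pow, Complex.I_sq, Nat.factorial]
        push_cast
        ring_nf
    _ ≤ ‖(y : ℂ) * Complex.I‖ ^ 3 * exp ‖(y : ℂ) * Complex.I‖ :=
        Complex.norm_exp_sub_sum_le_norm_mul_exp _ 3
    _ = |y| ^ 3 * exp |y| := by simp
    _ ≤ 2 * |y| ^ 3 := by rw [mul_comm]; gcongr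

theorem norm_log_geomCharFun_sub_le {m y : ℝ} (hm : 0 ≤ m) (hy : (1 + m) * |y| ≤ 1 / 2) :
    ‖Complex.log (geomCharFun m y) -
      ((m * y : ℝ) * Complex.I - ((m + m ^ 2) * y ^ 2 / 2 : ℝ))‖ ≤ ((1 + m) * |y|) ^ 3 := by
  have hy' : |y| ≤ 1 / 2 := by nlinarith [abs_nonneg y]
  set e := Complex.exp (y * Complex.I) - 1 with he
  have hiy : ‖(y : ℂ) * Complex.I‖ = |y| := by simp
  have he1 : ‖e‖ ≤ |y| := by
    simpa [mul_comm, he] using norm_exp_I_mul_ofReal_sub_one_le (x := y)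
  have he2 : ‖e - y * Complex.I‖ ≤ |y| ^ 2 :=
    hiy ▸ Complex.norm_exp_sub_one_sub_id_le (by rw [hiy]; linarith)
  have he3 : ‖e - y * Complex.I + y ^ 2 / 2‖ ≤ 2 * |y| ^ 3 := norm_exp_mul_I_sub_quadratic_le hy'
  have hme : ‖m * e‖ ≤ m * |y| := by
    rw [norm_mul, Complex.norm_of_nonneg hm]
    gcongr
  have hlog := norm_log_one_sub_inv_sub_quadratic_le (z := m * e) (by linarith [abs_nonneg y])
  calc _ = ‖(Complex.log (1 - m * e)⁻¹ - (m * e + (m * e) ^ 2 / 2)) +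
          m * (e - y * Complex.I + y ^ 2 / 2) +
          m ^ 2 / 2 * ((e - y * Complex.I) * (e + y * Complex.I))‖ := by
        rw [geomCharFun, ← he]
        congr 1
        push_cast
        linear_combination ((m : ℂ) ^ 2 * y ^ 2 / 2) * Complex.I_sq
    _ ≤ ‖Complex.log (1 - m * e)⁻¹ - (m * e + (m * e) ^ 2 / 2)‖ +
          m * ‖e - y * Complex.I + y ^ 2 / 2‖ +
          m ^ 2 / 2 * (‖e - y * Complex.I‖ * (‖e‖ + ‖(y : ℂ) * Complex.I‖)) := by
        refine norm_add₃_le.trans ?_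
        rw [norm_mul, norm_mul (_ / _), norm_mul (e - _), norm_div, norm_pow,
          Complex.norm_of_nonneg hm, Complex.norm_two]
        gcongr
        exact norm_add_le _ _
    _ ≤ (m * |y|) ^ 3 + m * (2 * |y| ^ 3) + m ^ 2 / 2 * (|y| ^ 2 * (|y| + |y|)) := by
        rw [hiy]
        gcongr
        exact hlog.trans (by gcongr)
    _ ≤ ((1 + m) * |y|) ^ 3 := by
        nlinarith [pow_nonneg (abs_nonneg y) 3, mul_nonneg hm (pow_nonneg (abs_nonneg y) 3),
          mul_nonneg (sq_nonneg m) (pow_nonneg (abs_nonneg y) 3)]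

theorem norm_sum_log_geomCharFun_sub_le {κ : Type*} {s : Finset κ} {m y : κ → ℝ} {T : ℝ}
    (hm : ∀ k ∈ s, 0 ≤ m k) (hy : ∀ k ∈ s, (1 + m k) * |y k| ≤ T) (hT : T ≤ 1 / 2) :
    ‖∑ k ∈ s, Complex.log (geomCharFun (m k) (y k)) -
      ((∑ k ∈ s, m k * y k : ℝ) * Complex.I - (∑ k ∈ s, (m k + m k ^ 2) * y k ^ 2 / 2 : ℝ))‖ ≤
      #s * T ^ 3 := by
  rw [Complex.ofReal_sum, Complex.ofReal_sum, sum_mul, ← sum_sub_distrib, ← sum_sub_distrib,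
    ← nsmul_eq_mul]
  refine (norm_sum_le _ _).trans (sum_le_card_nsmul _ _ _ fun k hk => ?_)
  refine (norm_log_geomCharFun_sub_le (hm k hk) ((hy k hk).trans hT)).trans ?_
  have := hm k hk
  gcongr
  exact hy k hk

theorem exp_sum_log_geomCharFun {κ : Type*} {s : Finset κ} {m : κ → ℝ} (y : κ → ℝ)
    (hm : ∀ k ∈ s, 0 ≤ m k) :
    Complex.exp (∑ k ∈ s, Complex.log (geomCharFun (m k) (y k))) =
      ∏ k ∈ s, geomCharFun (m k) (y k) := by
  rw [Complex.exp_sum]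
  exact prod_congr rfl fun k hk => Complex.exp_log (geomCharFun_ne_zero (hm k hk) _)

/-- The mean occupation number `1 / (eᵗ - 1)` of Bose-Einstein statistics, which is the mean of the
geometric distribution of ratio `e⁻ᵗ`. -/
noncomputable def boseMean (t : ℝ) : ℝ := (exp t - 1)⁻¹

theorem boseMean_pos {t : ℝ} (ht : 0 < t) : 0 < boseMean t :=
  inv_pos.2 (sub_pos.2 (one_lt_exp_iff.2 ht))

theorem boseMean_le_boseMean {s t : ℝ} (hs : 0 < s) (hst : s ≤ t) : boseMean t ≤ boseMean s :=
  inv_anti₀ (sub_pos.2 (one_lt_exp_iff.2 hs)) (sub_le_sub_right (exp_le_exp.2 hst) 1)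

theorem mul_boseMean {t : ℝ} (ht : t ≠ 0) : t * boseMean t = G t := by
  rw [G, if_neg ht, boseMean, div_eq_mul_inv]

theorem mul_one_add_boseMean {t : ℝ} (ht : t ≠ 0) : t * (1 + boseMean t) = G (-t) := by
  rw [mul_one_add, mul_boseMean ht, G_neg]
  linear_combination -exp_sub_one_mul_G t

theorem G_neg_le_one_add {t : ℝ} (ht : 0 < t) : G (-t) ≤ 1 + t := by
  rw [← mul_one_add_boseMean ht.ne', mul_one_add, mul_boseMean ht.ne']
  linarith [G_le_one ht.le]

theorem inv_one_sub_exp_neg_mul_exp_mul_I {t : ℝ} (ht : 0 < t) (y : ℝ) :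
    (1 - exp (-t) * Complex.exp (y * Complex.I))⁻¹ =
      ((1 - exp (-t))⁻¹ : ℝ) * geomCharFun (boseMean t) y := by
  have hsub : (exp t : ℂ) - 1 ≠ 0 := by exact_mod_cast (sub_pos.2 (one_lt_exp_iff.2 ht)).ne'
  have hne : (exp t : ℂ) ≠ 0 := by exact_mod_cast (exp_pos t).ne'
  simp only [geomCharFun, boseMean, exp_neg, Complex.ofReal_inv, Complex.ofReal_sub,
    Complex.ofReal_one, ← mul_inv]
  congr 1
  field_simp
  ring

/-- The characteristic function at `θ` of the size of a random partition into parts of size at most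
`N`, in which the number of parts of size `k` is geometric of ratio `e^(-αk)`, independently for
each `k`. -/
noncomputable def tiltedCharFun (α : ℝ) (N : ℕ) (θ : ℝ) : ℂ :=
  ∏ k ∈ range N, geomCharFun (boseMean (α * (k + 1))) ((k + 1) * θ)

theorem partsGenFun_exp_neg_add_mul_I {α : ℝ} (hα : 0 < α) (N : ℕ) (θ : ℝ) :
    partsGenFun N (Complex.exp (-α + θ * Complex.I)) =
      (partsGenFun N (exp (-α)) : ℝ) * tiltedCharFun α N θ := by
  rw [partsGenFun, partsGenFun, tiltedCharFun, Complex.ofReal_prod, ← prod_mul_distrib]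
  refine prod_congr rfl fun k _ => ?_
  have hreal : exp (-α) ^ (k + 1) = exp (-(α * (k + 1))) := by
    rw [← exp_nat_mul]
    push_cast
    ring_nf
  have hcomplex : Complex.exp (-α + θ * Complex.I) ^ (k + 1) =
      exp (-(α * (k + 1))) * Complex.exp (((k + 1) * θ : ℝ) * Complex.I) := by
    rw [← Complex.exp_nat_mul, Complex.ofReal_exp, ← Complex.exp_add]
    push_cast
    ring_nf
  rw [hreal, hcomplex, inv_one_sub_exp_neg_mul_exp_mul_I (by positivity)]

theorem continuous_geomCharFun {m : ℝ} (hm : 0 ≤ m) : Continuous (geomCharFun m) := by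
  refine Continuous.inv₀ (by fun_prop) fun y h => geomCharFun_ne_zero hm y ?_
  rw [geomCharFun, h, inv_zero]

theorem continuous_tiltedCharFun {α : ℝ} (hα : 0 < α) (N : ℕ) :
    Continuous (tiltedCharFun α N) :=
  continuous_finsetProd _ fun k _ =>
    (continuous_geomCharFun (boseMean_pos (by positivity)).le).comp (continuous_const_mul _)

theorem norm_sum_log_tiltedCharFun_sub_le {α : ℝ} (hα : 0 < α) {N : ℕ} {θ : ℝ}
    (hθ : (1 + α * N) * |θ / α| ≤ 1 / 2) :
    ‖∑ k ∈ range N, Complex.log (geomCharFun (boseMean (α * (k + 1))) ((k + 1) * θ)) -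
      ((θ / α * ∑ k ∈ range N, G (α * (k + 1)) : ℝ) * Complex.I -
        ((θ / α) ^ 2 / 2 * ∑ k ∈ range N, einstein (α * (k + 1)) : ℝ))‖ ≤
      N * ((1 + α * N) * |θ / α|) ^ 3 := by
  have hpos (k : ℕ) : 0 < α * (k + 1) := by positivity
  have hscale (k : ℕ) : (k + 1) * θ = α * (k + 1) * (θ / α) := by field_simp
  have hlinear (k : ℕ) : boseMean (α * (k + 1)) * ((k + 1) * θ) = θ / α * G (α * (k + 1)) := by
    rw [← mul_boseMean (hpos k).ne', hscale]
    ring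
  have hquadratic (k : ℕ) :
      (boseMean (α * (k + 1)) + boseMean (α * (k + 1)) ^ 2) * ((k + 1) * θ) ^ 2 / 2 =
        (θ / α) ^ 2 / 2 * einstein (α * (k + 1)) := by
    rw [einstein, ← mul_one_add_boseMean (hpos k).ne', ← mul_boseMean (hpos k).ne', hscale]
    ring
  have hsmall (k : ℕ) (hk : k ∈ range N) :
      (1 + boseMean (α * (k + 1))) * |(k + 1) * θ| ≤ (1 + α * N) * |θ / α| := by
    have hkN : (k + 1 : ℝ) ≤ N := by exact_mod_cast mem_range.1 hk
    rw [hscale, abs_mul, abs_of_pos (hpos k), ← mul_assoc, mul_comm (1 + boseMean _),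
      mul_one_add_boseMean (hpos k).ne']
    gcongr
    exact (G_neg_le_one_add (hpos k)).trans (by gcongr)
  have h := norm_sum_log_geomCharFun_sub_le (fun k _ => (boseMean_pos (hpos k)).le) hsmall hθ
  simpa only [hlinear, hquadratic, ← mul_sum, card_range] using h

theorem tendsto_sum_div {ι : Type*} {l : Filter ι} {f : ℝ → ℝ} (hf : ContDiff ℝ 2 f)
    {N : ι → ℕ} {v : ι → ℝ} {w : ℝ} (hN : Tendsto N l atTop) (hv : Tendsto v l (𝓝 w))
    (hw : 0 < w) :
    Tendsto (fun n => (∑ k ∈ range (N n), f (v n / N n * (k + 1))) / N n) l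
      (𝓝 ((∫ t in (0 : ℝ)..w, f t) / w)) := by
  have hNinv := (tendsto_inv_atTop_nhds_zero_nat (𝕜 := ℝ)).comp hN
  have hintegral : Tendsto (fun n => ∫ t in (0 : ℝ)..v n, f t) l (𝓝 (∫ t in (0 : ℝ)..w, f t)) :=
    ((intervalIntegral.continuous_primitive
      (fun a b => hf.continuous.intervalIntegrable a b) 0).tendsto w).comp hv
  have h := ((tendsto_sum_sub_integral hf hN hv hw).mul hNinv).add (hintegral.div hv hw.ne')
  rw [mul_zero, zero_add] at h
  refine h.congr' ?_
  filter_upwards [hN.eventually_gt_atTop 0] with n hn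
  have hn' : (N n : ℝ) ≠ 0 := by exact_mod_cast hn.ne'
  simp only [Function.comp_apply, Pi.div_apply]
  generalize ∑ k ∈ range (N n), f (v n / N n * (k + 1)) = S
  field_simp
  ring

theorem tendsto_sqrt_natCast {ι : Type*} {l : Filter ι} {N : ι → ℕ} (hN : Tendsto N l atTop) :
    Tendsto (fun n => √(N n : ℝ)) l atTop :=
  tendsto_sqrt_atTop.comp (tendsto_natCast_atTop_atTop.comp hN)

theorem tendsto_natCast_mul_div_sqrt_pow_three {ι : Type*} {l : Filter ι} {N : ι → ℕ}
    {c : ι → ℝ} {C : ℝ} (hN : Tendsto N l atTop) (hc : Tendsto c l (𝓝 C)) :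
    Tendsto (fun n => N n * (c n / √(N n)) ^ 3) l (𝓝 0) := by
  have h := (hc.pow 3).mul (tendsto_sqrt_natCast hN).inv_tendsto_atTop
  rw [mul_zero] at h
  refine h.congr' ?_
  filter_upwards [hN.eventually_gt_atTop 0] with n hn
  have hn' : (0 : ℝ) < N n := by exact_mod_cast hn
  have := sqrt_pos.2 hn'
  simp only [Pi.inv_apply]
  field_simp
  rw [sq_sqrt hn'.le]

section LocalLimit

variable {ι : Type*} {l : Filter ι} {N E : ι → ℕ} {v : ι → ℝ} {w : ℝ}

theorem tendsto_sum_log_tiltedCharFun_sub (hN : Tendsto N l atTop) (hv : Tendsto v l (𝓝 w))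
    (hw : 0 < w) (x : ℝ) :
    Tendsto (fun n => ∑ k ∈ range (N n), Complex.log
          (geomCharFun (boseMean (v n / N n * (k + 1))) ((k + 1) * (x / (N n * √(N n))))) -
        ((x / (v n * √(N n)) * ∑ k ∈ range (N n), G (v n / N n * (k + 1)) : ℝ) * Complex.I -
          ((x / (v n * √(N n))) ^ 2 / 2 *
            ∑ k ∈ range (N n), einstein (v n / N n * (k + 1)) : ℝ))) l (𝓝 0) := by
  have hc : Tendsto (fun n => (1 + v n) * |x / v n|) l (𝓝 ((1 + w) * |x / w|)) :=
    (hv.const_add 1).mul (tendsto_const_nhds.div hv hw.ne').abs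
  have hsmall : Tendsto (fun n => (1 + v n) * |x / v n| / √(N n)) l (𝓝 0) :=
    hc.div_atTop (tendsto_sqrt_natCast hN)
  refine squeeze_zero_norm' ?_ (tendsto_natCast_mul_div_sqrt_pow_three hN hc)
  filter_upwards [hN.eventually_gt_atTop 0, hv.eventually_const_lt hw,
    hsmall.eventually_le_const (by norm_num : (0 : ℝ) < 1 / 2)] with n hNn hvn hn
  have hNpos : (0 : ℝ) < N n := by exact_mod_cast hNn
  have hscale : x / (N n * √(N n)) / (v n / N n) = x / (v n * √(N n)) := by field_simp
  have hbound : (1 + v n / N n * N n) * |x / (v n * √(N n))| =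
      (1 + v n) * |x / v n| / √(N n) := by
    rw [div_mul_cancel₀ _ hNpos.ne', ← div_div, abs_div, abs_of_nonneg (sqrt_nonneg _),
      mul_div_assoc]
  have h := norm_sum_log_tiltedCharFun_sub_le (div_pos hvn hNpos) (N := N n)
    (θ := x / (N n * √(N n))) (by rwa [hscale, hbound])
  rwa [hscale, hbound] at h

theorem tendsto_tiltedCharFun_mul_exp (hN : Tendsto N l atTop) (hv : Tendsto v l (𝓝 w))
    (hw : 0 < w) (hE : ∀ᶠ n in l, (v n / N n) ^ 2 * E n = ∫ t in (0 : ℝ)..v n, G t) (x : ℝ) :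
    Tendsto (fun n => tiltedCharFun (v n / N n) (N n) (x / (N n * √(N n))) *
        Complex.exp (-(E n * ((x / (N n * √(N n)) : ℝ) * Complex.I)))) l
      (𝓝 (exp (-((∫ t in (0 : ℝ)..w, einstein t) / w / (2 * w ^ 2)) * x ^ 2) : ℝ)) := by
  have hlinear := ((tendsto_const_nhds (x := x)).div_atTop
    (hv.pos_mul_atTop hw (tendsto_sqrt_natCast hN))).mul
      (tendsto_sum_sub_integral contDiff_G hN hv hw)
  have hquadratic := ((tendsto_sum_div contDiff_einstein hN hv hw).div
    ((hv.pow 2).const_mul 2) (by positivity)).mul_const (x ^ 2)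
  have hexponent := (tendsto_sum_log_tiltedCharFun_sub hN hv hw x).add
    ((((Complex.continuous_ofReal.tendsto _).comp hlinear).mul_const Complex.I).sub
      ((Complex.continuous_ofReal.tendsto _).comp hquadratic))
  rw [zero_mul, Complex.ofReal_zero, zero_mul, zero_sub, zero_add,
    ← Complex.ofReal_neg, ← neg_mul] at hexponent
  rw [Complex.ofReal_exp]
  refine hexponent.cexp.congr' ?_
  filter_upwards [hN.eventually_gt_atTop 0, hv.eventually_const_lt hw, hE] with n hNn hvn hEn
  have hNpos : (0 : ℝ) < N n := by exact_mod_cast hNn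
  have hmean : E n * (x / (N n * √(N n))) =
      x / (v n * √(N n)) * (N n / v n * ∫ t in (0 : ℝ)..v n, G t) := by
    rw [← hEn]
    field_simp
  have hvariance (S : ℝ) : S / N n / (2 * v n ^ 2) * x ^ 2 = (x / (v n * √(N n))) ^ 2 / 2 * S := by
    rw [div_pow, mul_pow, sq_sqrt hNpos.le]
    field_simp
  rw [tiltedCharFun, ← exp_sum_log_geomCharFun _ fun k _ => (boseMean_pos (by positivity)).le,
    ← Complex.exp_add, ← mul_assoc (E n : ℂ), ← Complex.ofReal_natCast, ← Complex.ofReal_mul, hmean]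
  simp only [Function.comp_apply, Pi.div_apply, hvariance, mul_sub, sub_mul,
    Complex.ofReal_sub]
  congr 1
  abel

end LocalLimit

theorem norm_geomCharFun_le {μ m : ℝ} (hμ : 0 ≤ μ) (hμm : μ ≤ m) (y : ℝ) :
    ‖geomCharFun m y‖ ≤ exp (-(μ / (1 + 4 * μ) * (1 - cos y))) := by
  set c := μ / (1 + 4 * μ) * (1 - cos y) with hc
  have ht : 0 ≤ 1 - cos y := sub_nonneg.2 (cos_le_one y)
  have ht' : 1 - cos y ≤ 2 := by linarith [neg_one_le_cos y]
  have hexp : exp (2 * c) ≤ 1 + 2 * μ * (1 - cos y) := by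
    have hpos : 0 < 1 - 2 * c := by
      rw [hc, ← mul_assoc, ← mul_div_assoc, div_mul_eq_mul_div, sub_pos, div_lt_one (by positivity)]
      nlinarith
    calc exp (2 * c) ≤ (1 - 2 * c)⁻¹ := by
          rw [← inv_inv (exp (2 * c)), ← exp_neg]
          exact inv_anti₀ hpos (by linarith [add_one_le_exp (-(2 * c))])
      _ ≤ 1 + 2 * μ * (1 - cos y) := by
          rw [inv_le_iff_one_le_mul₀ hpos, hc]
          field_simp
          nlinarith [mul_nonneg (mul_nonneg hμ hμ) (mul_nonneg ht (sub_nonneg.2 ht'))]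
  have hsq : exp c ^ 2 ≤ ‖(geomCharFun m y)⁻¹‖ ^ 2 := by
    rw [norm_inv_geomCharFun_sq, ← exp_nat_mul, Nat.cast_two]
    refine hexp.trans ?_
    rw [mul_assoc 2 m]
    gcongr
    nlinarith
  rw [exp_neg, ← inv_inv (geomCharFun m y), norm_inv]
  exact inv_anti₀ (exp_pos c) (abs_le_of_sq_le_sq' hsq (norm_nonneg _)).2

theorem norm_tiltedCharFun_le {α β : ℝ} (hα : 0 < α) {N : ℕ} (hβ : α * N ≤ β) (θ : ℝ) :
    ‖tiltedCharFun α N θ‖ ≤ exp (-(boseMean β / (1 + 4 * boseMean β) *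
      ∑ k ∈ range N, (1 - cos ((k + 1) * θ)))) := by
  rw [tiltedCharFun, norm_prod, mul_sum, ← sum_neg_distrib, exp_sum]
  refine prod_le_prod (fun _ _ => norm_nonneg _) fun k hk => ?_
  have hpos : 0 < α * (k + 1) := by positivity
  have hkN : (k + 1 : ℝ) ≤ N := by exact_mod_cast mem_range.1 hk
  have hle : α * (k + 1) ≤ β := hβ.trans' (by gcongr)
  exact norm_geomCharFun_le (boseMean_pos (hpos.trans_le hle)).le (boseMean_le_boseMean hpos hle) _

theorem two_mul_sin_mul_sum_cos (N : ℕ) (θ : ℝ) :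
    2 * sin (θ / 2) * ∑ k ∈ range N, cos ((k + 1) * θ) =
      sin ((N + 1 / 2) * θ) - sin (θ / 2) := by
  induction N with
  | zero => rw [sum_range_zero, mul_zero, Nat.cast_zero, zero_add, one_div_mul_eq_div, sub_self]
  | succ n ih =>
    have hprev : (n + 1 / 2) * θ = (n + 1) * θ - θ / 2 := by ring
    have hnext : ((n + 1 : ℕ) + 1 / 2) * θ = (n + 1) * θ + θ / 2 := by push_cast; ring
    rw [sum_range_succ, mul_add, ih, hprev, hnext, sin_sub, sin_add]
    ring

theorem half_le_sum_one_sub_cos {N : ℕ} {θ : ℝ} (hθ : |θ| ≤ π) (hNθ : π ≤ N * |θ|) :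
    (N : ℝ) / 2 ≤ ∑ k ∈ range N, (1 - cos ((k + 1) * θ)) := by
  have hsum := congrArg (sin (θ / 2) * ·) (two_mul_sin_mul_sum_cos N θ)
  have hbound : sin (θ / 2) * sin ((N + 1 / 2) * θ) ≤ |sin (θ / 2)| :=
    (le_abs_self _).trans (by
      rw [abs_mul]
      exact mul_le_of_le_one_right (abs_nonneg _) (abs_sin_le_one _))
  have hsin := mul_abs_le_abs_sin (x := θ / 2) (by rw [abs_div, abs_two]; linarith)
  rw [abs_div, abs_two] at hsin
  have hsinpos : 1 ≤ N * |sin (θ / 2)| := by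
    calc (1 : ℝ) ≤ N * |θ| / π := (one_le_div pi_pos).2 hNθ
      _ = N * (2 / π * (|θ| / 2)) := by ring
      _ ≤ _ := by gcongr
  rw [sum_sub_distrib, sum_const, card_range, nsmul_one]
  set S := ∑ k ∈ range N, cos ((k + 1) * θ)
  set s := |sin (θ / 2)|
  have hs2 : sin (θ / 2) ^ 2 = s ^ 2 := (sq_abs _).symm
  have hspos : 0 < s := pos_of_mul_pos_right (one_pos.trans_le hsinpos) N.cast_nonneg
  have hle : 2 * s * S ≤ 1 := by
    refine le_of_mul_le_mul_left ?_ hspos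
    linear_combination hsum + hbound - 2 * S * hs2 + sq_nonneg (sin (θ / 2))
  have hS : S ≤ N / 2 := by
    rcases le_total S 0 with hS0 | hS0
    · exact hS0.trans (by positivity)
    · nlinarith
  linarith

theorem pow_three_div_le_sum_sq (N : ℕ) : (N : ℝ) ^ 3 / 3 ≤ ∑ k ∈ range N, (k + 1 : ℝ) ^ 2 := by
  induction N with
  | zero => simp
  | succ n ih =>
    rw [sum_range_succ]
    push_cast
    nlinarith [n.cast_nonneg (α := ℝ)]

theorem le_sum_one_sub_cos {N : ℕ} {θ : ℝ} (hNθ : N * |θ| ≤ π) :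
    2 / (3 * π ^ 2) * (N ^ 3 * θ ^ 2) ≤ ∑ k ∈ range N, (1 - cos ((k + 1) * θ)) := by
  calc _ = 2 / π ^ 2 * θ ^ 2 * (N ^ 3 / 3) := by ring
    _ ≤ 2 / π ^ 2 * θ ^ 2 * ∑ k ∈ range N, (k + 1 : ℝ) ^ 2 := by
        gcongr
        exact pow_three_div_le_sum_sq N
    _ = ∑ k ∈ range N, 2 / π ^ 2 * ((k + 1) * θ) ^ 2 := by
        rw [mul_sum]
        exact sum_congr rfl fun k _ => by ring
    _ ≤ _ := by
        refine sum_le_sum fun k hk => ?_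
        have hkN : (k + 1 : ℝ) ≤ N := by exact_mod_cast mem_range.1 hk
        have hle : |(k + 1) * θ| ≤ π := by
          rw [abs_mul, abs_of_pos k.cast_add_one_pos]
          exact hNθ.trans' (by gcongr)
        linarith [cos_le_one_sub_mul_cos_sq hle]

/-- For `N |θ| ≤ π` the sum is of order `N³ θ²`; beyond that range it is at least `N / 2`, whose
exponential dominates `N³`. -/
theorem exists_one_add_sq_le_exp_sum {c : ℝ} (hc : 0 < c) :
    ∃ b > 0, ∀ N : ℕ, 0 < N → ∀ θ : ℝ, |θ| ≤ π →
      1 + b * (N ^ 3 * θ ^ 2) ≤ exp (c * ∑ k ∈ range N, (1 - cos ((k + 1) * θ))) := by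
  refine ⟨min (c * (2 / (3 * π ^ 2))) ((c / 2) ^ 3 / 6 / π ^ 2), by positivity,
    fun N hN θ hθ => ?_⟩
  rcases le_total (N * |θ|) π with hNθ | hNθ
  · calc _ ≤ 1 + c * (2 / (3 * π ^ 2)) * (N ^ 3 * θ ^ 2) := by
          gcongr
          exact min_le_left _ _
      _ = 1 + c * (2 / (3 * π ^ 2) * (N ^ 3 * θ ^ 2)) := by ring
      _ ≤ 1 + c * ∑ k ∈ range N, (1 - cos ((k + 1) * θ)) := by
          gcongr
          exact le_sum_one_sub_cos hNθ
      _ ≤ _ := by linarith [add_one_le_exp (c * ∑ k ∈ range N, (1 - cos ((k + 1) * θ)))]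
  · have hθ2 : θ ^ 2 ≤ π ^ 2 := sq_le_sq' (neg_le_of_abs_le hθ) (le_of_abs_le hθ)
    calc _ ≤ 1 + (c / 2) ^ 3 / 6 / π ^ 2 * (N ^ 3 * π ^ 2) := by
          gcongr
          exact min_le_right _ _
      _ = 1 + (c * (N / 2)) ^ 3 / 6 := by field_simp
      _ ≤ exp (c * (N / 2)) := by
          have h := sum_le_exp_of_nonneg (x := c * (N / 2)) (by positivity) 4
          simp only [sum_range_succ, sum_range_zero, Nat.factorial, Nat.cast_succ, Nat.cast_zero]
            at h
          have h2 : 0 ≤ c * (N / 2 : ℝ) := by positivity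
          have h3 : 0 ≤ (c * (N / 2 : ℝ)) ^ 2 := by positivity
          linarith
      _ ≤ _ := by
          gcongr
          exact half_le_sum_one_sub_cos hθ hNθ

theorem tendsto_intervalIntegral_of_dominated {ι V : Type*} {l : Filter ι}
    [l.IsCountablyGenerated] [NormedAddCommGroup V] [NormedSpace ℝ V] {F : ι → ℝ → V} {f : ℝ → V}
    {bound : ℝ → ℝ} {a : ι → ℝ} (ha : Tendsto a l atTop)
    (hF : ∀ᶠ n in l, AEStronglyMeasurable (F n)) (hint : Integrable bound)
    (hbound : ∀ᶠ n in l, ∀ x, |x| ≤ a n → ‖F n x‖ ≤ bound x)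
    (hlim : ∀ x, Tendsto (fun n => F n x) l (𝓝 (f x))) :
    Tendsto (fun n => ∫ x in (-a n)..a n, F n x) l (𝓝 (∫ x, f x)) := by
  have hindicator : Tendsto (fun n => ∫ x, (Set.Ioc (-a n) (a n)).indicator (F n) x) l
      (𝓝 (∫ x, f x)) := by
    refine tendsto_integral_filter_of_dominated_convergence (fun x => |bound x|)
      (hF.mono fun n hn => hn.indicator measurableSet_Ioc) ?_ hint.abs (.of_forall fun x => ?_)
    · filter_upwards [hbound] with n hn
      refine .of_forall fun x => ?_
      rw [norm_indicator_eq_indicator_norm]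
      exact Set.indicator_le' (fun x hx => (hn x (abs_le.2 ⟨hx.1.le, hx.2⟩)).trans (le_abs_self _))
        (fun x _ => abs_nonneg _) x
    · refine (hlim x).congr' ?_
      filter_upwards [ha.eventually_gt_atTop |x|] with n hn
      rw [Set.indicator_of_mem (Set.mem_Ioc.2 ⟨(abs_lt.1 hn).1, (abs_lt.1 hn).2.le⟩)]
  refine hindicator.congr' ?_
  filter_upwards [ha.eventually_ge_atTop 0] with n hn
  rw [integral_indicator measurableSet_Ioc, intervalIntegral.integral_of_le (by linarith)]

theorem integrable_inv_one_add_mul_sq {b : ℝ} (hb : 0 < b) :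
    Integrable fun x : ℝ => (1 + b * x ^ 2)⁻¹ := by
  have h := integrable_inv_one_add_sq.comp_mul_left' (sqrt_pos.2 hb).ne'
  simpa only [mul_pow, sq_sqrt hb.le] using h

theorem exists_norm_tiltedCharFun_le_inv {β : ℝ} (hβ : 0 < β) :
    ∃ b > 0, ∀ α > 0, ∀ N : ℕ, 0 < N → α * N ≤ β → ∀ x : ℝ, |x| ≤ π * (N * √N) →
      ‖tiltedCharFun α N (x / (N * √N))‖ ≤ (1 + b * x ^ 2)⁻¹ := by
  have hmean := boseMean_pos hβ
  obtain ⟨b, hb, hexp⟩ := exists_one_add_sq_le_exp_sum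
    (by positivity : 0 < boseMean β / (1 + 4 * boseMean β))
  refine ⟨b, hb, fun α hα N hN hαN x hx => ?_⟩
  have hNpos : (0 : ℝ) < N := by exact_mod_cast hN
  have hθ : |x / (N * √N)| ≤ π := by
    rwa [abs_div, abs_of_pos (by positivity : 0 < (N * √N : ℝ)), div_le_iff₀ (by positivity)]
  have hsq : (N : ℝ) ^ 3 * (x / (N * √N)) ^ 2 = x ^ 2 := by
    rw [div_pow, mul_pow, sq_sqrt hNpos.le]
    field_simp
  refine (norm_tiltedCharFun_le hα hαN _).trans ?_
  rw [exp_neg]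
  refine inv_anti₀ (by positivity) ?_
  simpa only [hsq] using hexp N hN _ hθ

theorem tendsto_integral_tiltedCharFun {ι : Type*} {l : Filter ι} [l.IsCountablyGenerated]
    {N E : ι → ℕ} {v : ι → ℝ} {w : ℝ} (hN : Tendsto N l atTop) (hv : Tendsto v l (𝓝 w))
    (hw : 0 < w) (hE : ∀ᶠ n in l, (v n / N n) ^ 2 * E n = ∫ t in (0 : ℝ)..v n, G t) :
    Tendsto (fun n => (N n * √(N n) : ℝ) * ∫ θ in (-π)..π, tiltedCharFun (v n / N n) (N n) θ *
        Complex.exp (-(E n * (θ * Complex.I)))) l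
      (𝓝 √(2 * π * w ^ 3 / ∫ t in (0 : ℝ)..w, einstein t)) := by
  have hscale : Tendsto (fun n => (N n * √(N n) : ℝ)) l atTop :=
    (tendsto_natCast_atTop_atTop.comp hN).atTop_mul_atTop₀ (tendsto_sqrt_natCast hN)
  obtain ⟨b, hb, hbound⟩ := exists_norm_tiltedCharFun_le_inv (by positivity : 0 < w + 1)
  have hpos : ∀ᶠ n in l, (0 : ℝ) < N n ∧ 0 < v n :=
    ((tendsto_natCast_atTop_atTop.comp hN).eventually_gt_atTop 0).and (hv.eventually_const_lt hw)
  have h := tendsto_intervalIntegral_of_dominated (hscale.const_mul_atTop pi_pos) (l := l)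
    (F := fun n x => tiltedCharFun (v n / N n) (N n) (x / (N n * √(N n))) *
      Complex.exp (-(E n * ((x / (N n * √(N n)) : ℝ) * Complex.I)))) ?_
    (integrable_inv_one_add_mul_sq hb) ?_ (tendsto_tiltedCharFun_mul_exp hN hv hw hE)
  · rw [integral_complex_ofReal, integral_gaussian] at h
    have hwidth (I : ℝ) : π / (I / w / (2 * w ^ 2)) = 2 * π * w ^ 3 / I := by
      rw [div_div, div_div_eq_mul_div]
      ring
    rw [hwidth] at h
    refine h.congr' ?_
    filter_upwards [hpos] with n ⟨hNn, _⟩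
    have hM : (N n * √(N n) : ℝ) ≠ 0 := by positivity
    rw [intervalIntegral.integral_comp_div (fun θ : ℝ => tiltedCharFun (v n / N n) (N n) θ *
      Complex.exp (-(E n * (θ * Complex.I)))) hM, neg_div, mul_div_cancel_right₀ _ hM,
      Complex.real_smul]
  · filter_upwards [hpos] with n ⟨hNn, hvn⟩
    have := continuous_tiltedCharFun (div_pos hvn hNn) (N n)
    exact Continuous.aestronglyMeasurable (by fun_prop)
  · filter_upwards [hpos, hv.eventually_le_const (lt_add_one w)] with n ⟨hNn, hvn⟩ hvw x hx
    have hnorm : ‖Complex.exp (-(E n * ((x / (N n * √(N n)) : ℝ) * Complex.I)))‖ = 1 := by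
      rw [← Complex.norm_exp_ofReal_mul_I (-(E n * (x / (N n * √(N n)))))]
      push_cast
      ring_nf
    rw [norm_mul, hnorm, mul_one]
    exact hbound _ (div_pos hvn hNn) _ (by exact_mod_cast hNn)
      ((div_mul_cancel₀ _ hNn.ne').trans_le hvw) _ hx

/-! ### The saddle-point asymptotics -/

theorem integral_einstein_pos {v : ℝ} (hv : 0 < v) : 0 < ∫ t in (0 : ℝ)..v, einstein t :=
  intervalIntegral.intervalIntegral_pos_of_pos (continuous_einstein.intervalIntegrable _ _)
    einstein_pos hv

/-- The limit of `N² P(E, N) e^(-2αE) (1 - e⁻ᵛ) ^ N` along the saddle points `α = v / N`; the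
factor `f` of the paper is this constant divided by `u²`. -/
noncomputable def saddleConst (v : ℝ) : ℝ :=
  √(G (-v) * (v ^ 3 / ∫ t in (0 : ℝ)..v, einstein t)) / (2 * π)

theorem saddleConst_pos {v : ℝ} (hv : 0 < v) : 0 < saddleConst v := by
  have := integral_einstein_pos hv
  have := G_pos (-v)
  rw [saddleConst]
  positivity

theorem continuousAt_saddleConst {v : ℝ} (hv : 0 < v) : ContinuousAt saddleConst v := by
  have hint : Continuous fun v => ∫ t in (0 : ℝ)..v, einstein t :=
    intervalIntegral.continuous_primitive
      (fun a b => continuous_einstein.intervalIntegrable a b) 0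
  have hG : Continuous fun v => G (-v) := continuous_G.comp continuous_neg
  refine ContinuousAt.div_const (ContinuousAt.sqrt ?_) _
  exact hG.continuousAt.mul
    ((continuous_pow 3).continuousAt.div hint.continuousAt (integral_einstein_pos hv).ne')

/-- The exponent `g(u)` of the paper, as a function of `u` and of the saddle point `v`. -/
noncomputable def growthRate (u v : ℝ) : ℝ := 2 * v / u - u * log (1 - exp (-v))

/-- The factor `f(u)` of the paper, as a function of `u` and of the saddle point `v`. -/
noncomputable def prefactor (u v : ℝ) : ℝ :=
  v / ((2 : ℝ) ^ ((3 : ℝ) / 2) * π * u) *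
    (1 - exp (-v) - u ^ 2 / 2 * exp (-v)) ^ (-(1 : ℝ) / 2)

theorem integral_einstein_mul_sq {u v : ℝ} (hu : u ≠ 0) (hv : 0 < v)
    (huv : v ^ 2 / u ^ 2 = ∫ t in (0 : ℝ)..v, G t) :
    (∫ t in (0 : ℝ)..v, einstein t) * u ^ 2 =
      2 * v * G (-v) * (1 - exp (-v) - u ^ 2 / 2 * exp (-v)) := by
  have hexp : 1 - exp (-v) ≠ 0 := (sub_pos.2 (exp_lt_one_iff.2 (neg_neg_iff_pos.2 hv))).ne'
  have hG : G v = exp (-v) * G (-v) := by rw [← G_neg, neg_neg]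
  rw [integral_einstein, ← huv, hG, G_neg_eq_div hv.ne']
  field_simp

theorem prefactor_eq {u v : ℝ} (hu : 0 < u) (hv : 0 < v)
    (huv : v ^ 2 / u ^ 2 = ∫ t in (0 : ℝ)..v, G t) : prefactor u v = saddleConst v / u ^ 2 := by
  have hint := integral_einstein_pos hv
  have hG := G_pos (-v)
  have hmul := integral_einstein_mul_sq hu.ne' hv huv
  rw [prefactor, saddleConst]
  set I := ∫ t in (0 : ℝ)..v, einstein t
  set B := 1 - exp (-v) - u ^ 2 / 2 * exp (-v)
  have hB : B = I * u ^ 2 / (2 * v * G (-v)) := by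
    rw [hmul]
    field_simp
  have hBinv : B⁻¹ = G (-v) * (v ^ 3 / I) * (√2 / (v * u)) ^ 2 := by
    rw [hB, div_pow, sq_sqrt zero_le_two]
    field_simp
  have hBpow : B ^ (-(1 : ℝ) / 2) = √(G (-v) * (v ^ 3 / I)) * (√2 / (v * u)) := by
    have hBpos : 0 ≤ B := hB ▸ by positivity
    rw [neg_div, rpow_neg hBpos, ← sqrt_eq_rpow, ← sqrt_inv, hBinv, sqrt_mul (by positivity),
      sqrt_sq (by positivity)]
  have htwo : (2 : ℝ) ^ ((3 : ℝ) / 2) = 2 * √2 := by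
    rw [show (3 : ℝ) / 2 = 1 + 1 / 2 by norm_num, rpow_add two_pos, rpow_one, ← sqrt_eq_rpow]
  rw [hBpow, htwo]
  field_simp

theorem exp_neg_sqrt_mul_growthRate {E N : ℕ} (hE : 0 < E) (hN : 0 < N) {v : ℝ} (hv : 0 < v) :
    exp (-√E * growthRate (N / √E) v) =
      exp (-(v / N * E)) * (exp (-(v / N * E)) * (1 - exp (-v)) ^ N) := by
  have hpos : 0 < 1 - exp (-v) := sub_pos.2 (exp_lt_one_iff.2 (neg_neg_iff_pos.2 hv))
  have hE' : (0 : ℝ) < E := by exact_mod_cast hE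
  have : (0 : ℝ) < N := by exact_mod_cast hN
  rw [← exp_log (pow_pos hpos N), log_pow, ← exp_add, ← exp_add, growthRate]
  congr 1
  field_simp
  rw [sq_sqrt hE'.le]
  ring

theorem P_mul_exp_eq_mul_integral {α : ℝ} (hα : 0 < α) (E N : ℕ) :
    (P E N * exp (-(α * E)) : ℝ) = partsGenFun N (exp (-α)) / (2 * π) *
      (∫ θ in (-π)..π, tiltedCharFun α N θ * Complex.exp (-(E * (θ * Complex.I)))).re := by
  have h := P_mul_exp_eq_integral hα E N
  simp only [partsGenFun_exp_neg_add_mul_I hα, mul_assoc, intervalIntegral.integral_const_mul] at h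
  have hre := congrArg Complex.re h
  rw [Complex.re_ofReal_mul] at hre
  rw [div_mul_eq_mul_div, eq_div_iff (by positivity), ← hre, ← Complex.ofReal_re (_ * _)]
  congr 1
  push_cast
  ring_nf

section SaddlePoint

variable {ι : Type*} {l : Filter ι} [l.IsCountablyGenerated] {N E : ι → ℕ} {v : ι → ℝ} {w : ℝ}

theorem tendsto_P_mul_exp (hN : Tendsto N l atTop) (hv : Tendsto v l (𝓝 w)) (hw : 0 < w)
    (hE : ∀ᶠ n in l, (v n / N n) ^ 2 * E n = ∫ t in (0 : ℝ)..v n, G t) :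
    Tendsto (fun n => P (E n) (N n) * N n ^ 2 * (exp (-(v n / N n * E n)) *
      (exp (-(v n / N n * E n)) * (1 - exp (-v n)) ^ N n))) l (𝓝 (saddleConst w)) := by
  have hre := (Complex.continuous_re.tendsto _).comp (tendsto_integral_tiltedCharFun hN hv hw hE)
  have h := ((tendsto_partsGenFun hN hv hw).mul hre).div_const (2 * π * √(2 * π))
  have hint := integral_einstein_pos hw
  have hlimit : √(G (-w)) * √(2 * π * w ^ 3 / ∫ t in (0 : ℝ)..w, einstein t) /
      (2 * π * √(2 * π)) = saddleConst w := by
    rw [saddleConst, mul_div_assoc (2 * π), sqrt_mul (by positivity : 0 ≤ 2 * π),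
      sqrt_mul (G_pos _).le]
    field_simp
  rw [Complex.ofReal_re, hlimit] at h
  refine h.congr' ?_
  filter_upwards [hN.eventually_gt_atTop 0, hv.eventually_const_lt hw, hE] with n hNn hvn hEn
  have hN' : (0 : ℝ) < N n := by exact_mod_cast hNn
  have hmean : N n / v n * ∫ t in (0 : ℝ)..v n, G t = v n / N n * E n := by
    rw [← hEn]
    field_simp
  have hsqrt : √(2 * π * N n) * √(N n) = √(2 * π) * N n := by
    rw [sqrt_mul (by positivity), mul_assoc, mul_self_sqrt hN'.le]
  have hP := P_mul_exp_eq_mul_integral (div_pos hvn hN') (E n) (N n)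
  rw [Function.comp_apply, Complex.re_ofReal_mul, hmean]
  set J := (∫ θ in (-π)..π, tiltedCharFun (v n / N n) (N n) θ *
    Complex.exp (-(E n * (θ * Complex.I)))).re
  set T := exp (-(v n / N n * E n)) * (1 - exp (-v n)) ^ N n
  calc _ = partsGenFun (N n) (exp (-(v n / N n))) / (2 * π) * J *
          (√(2 * π * N n) * √(N n) / √(2 * π) * N n * T) := by ring
    _ = _ := by
        rw [← hP, hsqrt, mul_div_cancel_left₀ _ (by positivity)]
        ring

theorem tendsto_P_mul_exp_div_prefactor (hN : Tendsto N l atTop) (hv : Tendsto v l (𝓝 w))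
    (hw : 0 < w) (hE : ∀ᶠ n in l, 0 < E n)
    (huv : ∀ᶠ n in l, v n ^ 2 / (N n / √(E n)) ^ 2 = ∫ t in (0 : ℝ)..v n, G t) :
    Tendsto (fun n => P (E n) (N n) * E n * exp (-√(E n) * growthRate (N n / √(E n)) (v n)) /
      prefactor (N n / √(E n)) (v n)) l (𝓝 1) := by
  have hrel : ∀ᶠ n in l, (v n / N n) ^ 2 * E n = ∫ t in (0 : ℝ)..v n, G t := by
    filter_upwards [huv] with n hn
    rw [← hn, div_pow, div_pow, sq_sqrt (E n).cast_nonneg, div_div_eq_mul_div, div_mul_eq_mul_div]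
  have h := (tendsto_P_mul_exp hN hv hw hrel).div ((continuousAt_saddleConst hw).tendsto.comp hv)
    (saddleConst_pos hw).ne'
  rw [div_self (saddleConst_pos hw).ne'] at h
  refine h.congr' ?_
  filter_upwards [hN.eventually_gt_atTop 0, hv.eventually_const_lt hw, hE, huv]
    with n hNn hvn hEn hn
  have : (0 : ℝ) < N n := by exact_mod_cast hNn
  have hE' : (0 : ℝ) < E n := by exact_mod_cast hEn
  rw [exp_neg_sqrt_mul_growthRate hEn hNn hvn, prefactor_eq (by positivity) hvn hn, div_pow,
    sq_sqrt hE'.le]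
  simp only [Pi.div_apply, Function.comp_apply]
  field_simp

end SaddlePoint

theorem le_of_sq_div_sq_eq_integral {u v : ℝ} (hu : 0 < u) (hv : 0 < v)
    (huv : v ^ 2 / u ^ 2 = ∫ t in (0 : ℝ)..v, G t) : v ≤ u ^ 2 := by
  have hle : ∫ t in (0 : ℝ)..v, G t ≤ v := by
    calc _ ≤ ∫ _ in (0 : ℝ)..v, (1 : ℝ) := intervalIntegral.integral_mono_on hv.le
          (continuous_G.intervalIntegrable _ _) intervalIntegrable_const fun t ht => G_le_one ht.1
      _ = v := by simp
  rw [← huv, div_le_iff₀ (by positivity), sq] at hle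
  exact le_of_mul_le_mul_left hle hv

theorem log_one_add_sq_le_of_sq_div_sq_eq_integral {u v : ℝ} (hu : 0 < u) (hv : 0 < v)
    (huv : v ^ 2 / u ^ 2 = ∫ t in (0 : ℝ)..v, G t) : log (1 + u ^ 2) ≤ v := by
  have hle : v * G v ≤ ∫ t in (0 : ℝ)..v, G t := by
    calc v * G v = ∫ _ in (0 : ℝ)..v, G v := by simp
      _ ≤ _ := intervalIntegral.integral_mono_on hv.le intervalIntegrable_const
          (continuous_G.intervalIntegrable _ _) fun t ht => antitoneOn_G ht.1 hv.le ht.2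
  rw [log_le_iff_le_exp (by positivity)]
  rw [← huv, div_eq_mul_inv, le_mul_inv_iff₀ (by positivity), sq v] at hle
  have hexp := exp_sub_one_mul_G v
  have hG := G_pos v
  have husq : G v * u ^ 2 ≤ G v * (exp v - 1) := by
    rw [mul_comm _ (exp v - 1), hexp]
    exact le_of_mul_le_mul_left (by rwa [← mul_assoc]) hv
  linarith [le_of_mul_le_mul_left husq hG]

theorem tendsto_atTop_of_le_div_sqrt {ι : Type*} {l : Filter ι} {E N : ι → ℕ} {a : ℝ}
    (ha : 0 < a) (hE : Tendsto E l atTop) (hu : ∀ᶠ n in l, a ≤ N n / √(E n)) :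
    Tendsto N l atTop := by
  rw [← tendsto_natCast_atTop_iff (R := ℝ)]
  refine tendsto_atTop_mono' l ?_ ((tendsto_sqrt_natCast hE).const_mul_atTop ha)
  filter_upwards [hu, hE.eventually_gt_atTop 0] with n hn hEn
  rwa [le_div_iff₀ (sqrt_pos.2 (by exact_mod_cast hEn))] at hn

theorem tendsto_P_mul_exp_div_prefactor_of_mem_Icc {v : ℝ → ℝ}
    (hv : ∀ u : ℝ, 0 < u → 0 < v u ∧ v u ^ 2 / u ^ 2 = ∫ t in (0 : ℝ)..v u, G t)
    {a b : ℝ} (ha : 0 < a) :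
    Tendsto (fun p : ℕ × ℕ => P p.1 p.2 * p.1 *
        exp (-√p.1 * growthRate (p.2 / √p.1) (v (p.2 / √p.1))) /
        prefactor (p.2 / √p.1) (v (p.2 / √p.1)))
      (comap Prod.fst atTop ⊓ 𝓟 {p | (p.2 / √p.1 : ℝ) ∈ Set.Icc a b}) (𝓝 1) := by
  refine tendsto_of_subseq_tendsto fun p hp => ?_
  obtain ⟨hE, hu⟩ := tendsto_inf.1 hp
  rw [tendsto_comap_iff] at hE
  rw [tendsto_principal] at hu
  have hmem : ∃ᶠ n in atTop, v ((p n).2 / √(p n).1) ∈ Set.Icc (log (1 + a ^ 2)) (b ^ 2) := by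
    refine (hu.mono fun n ⟨hau, hub⟩ => ?_).frequently
    have hupos := ha.trans_le hau
    obtain ⟨hvpos, hrel⟩ := hv _ hupos
    exact ⟨(log_le_log (by positivity) (by gcongr)).trans
        (log_one_add_sq_le_of_sq_div_sq_eq_integral hupos hvpos hrel),
      (le_of_sq_div_sq_eq_integral hupos hvpos hrel).trans (by gcongr)⟩
  obtain ⟨w, hwmem, s, hs, hlim⟩ := isCompact_Icc.tendsto_subseq' hmem
  have hw : 0 < w := (log_pos (lt_add_of_pos_right 1 (pow_pos ha 2))).trans_le hwmem.1
  have hEs := hE.comp hs.tendsto_atTop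
  have hus := hs.tendsto_atTop.eventually hu
  exact ⟨s, tendsto_P_mul_exp_div_prefactor
    (tendsto_atTop_of_le_div_sqrt ha hEs (hus.mono fun _ h => h.1)) hlim hw
    (hEs.eventually_gt_atTop 0) (hus.mono fun _ h => (hv _ (ha.trans_le h.1)).2)⟩

end BoundedPartitions

theorem stmt_15
    -- `v u` is the unique solution of the saddle-point equation for `u > 0`
    (v : ℝ → ℝ)
    (hv : ∀ u : ℝ, 0 < u →
      0 < v u ∧ (v u) ^ 2 / u ^ 2 = ∫ t in (0 : ℝ)..(v u), G t)
    (g f : ℝ → ℝ)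
    (hg : ∀ u : ℝ, g u = 2 * v u / u - u * Real.log (1 - Real.exp (-(v u))))
    (hf : ∀ u : ℝ, f u = v u / ((2 : ℝ) ^ ((3 : ℝ) / 2) * Real.pi * u) *
      (1 - Real.exp (-(v u)) - u ^ 2 / 2 * Real.exp (-(v u))) ^ (-(1 : ℝ) / 2))
    (δ : ℝ) (hδ : 0 < δ) (ε : ℝ) (hε : 0 < ε) :
    ∃ E₀ : ℕ, ∀ E : ℕ, E₀ ≤ E → ∀ N : ℕ, 0 < N →
      δ ≤ (N : ℝ) / Real.sqrt E → (N : ℝ) / Real.sqrt E ≤ 1 / δ →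
      |(P E N : ℝ) * (E : ℝ) *
          Real.exp (-(Real.sqrt E) * g ((N : ℝ) / Real.sqrt E)) /
          f ((N : ℝ) / Real.sqrt E) - 1| ≤ ε := by
  have hlim := Metric.tendsto_nhds.1
    (BoundedPartitions.tendsto_P_mul_exp_div_prefactor_of_mem_Icc hv (b := 1 / δ) hδ) ε hε
  rw [Filter.eventually_inf_principal, Filter.eventually_comap, Filter.eventually_atTop] at hlim
  obtain ⟨E₀, hE₀⟩ := hlim
  refine ⟨E₀, fun E hE N _ hlo hhi => ?_⟩
  have hdist := (hE₀ E hE (E, N) rfl ⟨hlo, hhi⟩).le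
  rw [BoundedPartitions.growthRate, BoundedPartitions.prefactor, Real.dist_eq] at hdist
  rwa [hg, hf]
end
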